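/- Let X be a compact forward invariant set (g(X) ⊂ X) with P_g ⊂ X, and define X_* = {x ∈ hull(X) : GO(x) ⊂ hull(X)}. If X_* ≠ ∅, then either P_g ⊂ X_* or ∂X_* ⊂ P_g. -/

import Mathlib

open Set Function Metric Topology Filter

noncomputable section

/-- A topological disk: a (nonempty, connected) simply connected planar domain. -/
def IsTopDisk (V : Set ℂ) : Prop :=
  IsOpen V ∧ IsConnected V ∧ SimplyConnectedSpace V

/-- Critical points of `g` lying in `U'`. -/
def critPts (g : ℂ → ℂ) (U' : Set ℂ) : Set ℂ := {z | z ∈ U' ∧ deriv g z = 0}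

/-- The postcritical set of `g : U' → U`. -/
def postCrit (g : ℂ → ℂ) (U' : Set ℂ) : Set ℂ :=
  closure (⋃ n : ℕ, g^[n] '' critPts g U')

/-- `g : U' → U` is a proper map: preimages of compact subsets of `U` are compact. -/
def ProperOn (g : ℂ → ℂ) (U' U : Set ℂ) : Prop :=
  ∀ K : Set ℂ, K ⊆ U → IsCompact K → IsCompact (U' ∩ g ⁻¹' K)

/-- `g : U' → U` has degree `d`: every point of `U` has a preimage, and every point of `U`
which is not a critical value has exactly `d` preimages in `U'`. -/
def HasDeg (g : ℂ → ℂ) (U' U : Set ℂ) (d : ℕ) : Prop :=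
  (∀ w ∈ U, (U' ∩ g ⁻¹' {w}).Nonempty) ∧
  ∀ w ∈ U, w ∉ g '' critPts g U' → (U' ∩ g ⁻¹' {w}).ncard = d

/-- Standing assumptions: `U' ⊆ U` are simply connected domains in `ℂ` with `U' ≠ U`,
`g : U' → U` is a proper holomorphic map of degree `d ≥ 2`, all forward iterates of the
critical points are defined, the postcritical set is a compact subset of `U'`, and if the
postcritical set is a singleton `{c}` then `g⁻¹(c) ≠ {c}`. -/
structure PLSetting (g : ℂ → ℂ) (U' U : Set ℂ) (d : ℕ) : Prop where
  disk' : IsTopDisk U'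
  disk : IsTopDisk U
  subset : U' ⊆ U
  ne : U' ≠ U
  two_le_d : 2 ≤ d
  holo : DifferentiableOn ℂ g U'
  mapsTo : MapsTo g U' U
  proper : ProperOn g U' U
  deg : HasDeg g U' U d
  crit_orbit : ∀ c ∈ critPts g U', ∀ n : ℕ, g^[n] c ∈ U'
  postCrit_compact : IsCompact (postCrit g U')
  postCrit_subset : postCrit g U' ⊆ U'
  postCrit_singleton : ∀ c : ℂ, postCrit g U' = {c} → U' ∩ g ⁻¹' {c} ≠ {c}

/-- The topological hull of `X`: the complement of the unbounded component of `ℂ \ X`. -/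
def topHull (X : Set ℂ) : Set ℂ :=
  {z | Bornology.IsBounded (connectedComponentIn Xᶜ z)}

/-- The grand orbit of `x`: points `z` (with iterates defined) such that
`g^m(z) = g^n(x)` for some `m, n ≥ 0`. -/
def grandOrbit (g : ℂ → ℂ) (U' : Set ℂ) (x : ℂ) : Set ℂ :=
  {z | ∃ m n : ℕ, (∀ k < m, g^[k] z ∈ U') ∧ g^[m] z = g^[n] x}


/-! ### Part A : topology of hulls -/

theorem frontier_escape {C K : Set ℂ} (hC : IsPreconnected C) (h1 : (C ∩ K).Nonempty)
    (h2 : ∀ z ∈ C, z ∉ frontier K) : C ⊆ K := by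
  intro z hz
  by_contra hzK
  have := hC (interior K) (closure K)ᶜ isOpen_interior isClosed_closure.isOpen_compl ?_ ?_ ?_
  · obtain ⟨w, -, hw1, hw2⟩ := this
    exact hw2 (subset_closure (interior_subset hw1))
  · intro w hw
    by_cases hwi : w ∈ interior K
    · exact Or.inl hwi
    · right
      intro hc
      exact h2 w hw ⟨hc, hwi⟩
  · obtain ⟨w, hw, hwK⟩ := h1
    refine ⟨w, hw, ?_⟩
    by_contra hwi
    exact h2 w hw ⟨subset_closure hwK, hwi⟩
  · refine ⟨z, hz, fun hc => h2 z hz ⟨hc, fun hi => hzK (interior_subset hi)⟩⟩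

theorem subset_topHull (A : Set ℂ) : A ⊆ topHull A := by
  intro x hx
  simp only [topHull, mem_setOf_eq]
  rw [connectedComponentIn_eq_empty (by simpa using hx)]
  exact Bornology.isBounded_empty

theorem preconn_ext (R : ℝ) (_hR : 0 < R) : IsPreconnected {z : ℂ | R < ‖z‖} := by
  have : {z : ℂ | R < ‖z‖} = (fun p : ℝ × ℝ => (p.1 : ℂ) * Complex.exp (p.2 * Complex.I)) ''
      (Ioi R ×ˢ univ) := by
    ext z
    simp only [mem_setOf_eq, mem_image, mem_prod, mem_Ioi, mem_univ, and_true, Prod.exists]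
    constructor
    · intro h
      exact ⟨‖z‖, z.arg, h, Complex.norm_mul_exp_arg_mul_I z⟩
    · rintro ⟨a, b, h, rfl⟩
      rw [norm_mul, Complex.norm_exp_ofReal_mul_I, mul_one, Complex.norm_real, Real.norm_eq_abs]
      exact lt_of_lt_of_le h (le_abs_self a)
  rw [this]
  exact (isPreconnected_Ioi.prod isPreconnected_univ).image _ (by fun_prop)

theorem ext_unbounded (R : ℝ) : ¬ Bornology.IsBounded {z : ℂ | R < ‖z‖} := by
  intro h
  have h2 := h.union (isBounded_closedBall (x := (0:ℂ)) (r := R))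
  apply NormedSpace.unbounded_univ ℝ ℂ
  refine h2.subset ?_
  intro z _
  by_cases hz : R < ‖z‖
  · exact Or.inl hz
  · right; simpa using hz

theorem comp_of_notMem {A : Set ℂ} {z : ℂ} (hz : z ∉ topHull A) :
    z ∈ connectedComponentIn Aᶜ z ∧ Disjoint (connectedComponentIn Aᶜ z) (topHull A) := by
  have hzA : z ∈ Aᶜ := fun h => hz (subset_topHull A h)
  refine ⟨mem_connectedComponentIn hzA, ?_⟩
  rw [Set.disjoint_left]
  intro w hw hwh
  apply hz
  simp only [topHull, mem_setOf_eq] at hwh ⊢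
  rwa [connectedComponentIn_eq hw]

theorem isClosed_topHull {A : Set ℂ} (hA : IsCompact A) : IsClosed (topHull A) := by
  rw [← isOpen_compl_iff, isOpen_iff_mem_nhds]
  intro z hz
  obtain ⟨h1, h2⟩ := comp_of_notMem hz
  exact Filter.mem_of_superset
    ((hA.isClosed.isOpen_compl.connectedComponentIn).mem_nhds h1) h2.subset_compl_right

theorem exists_ext {A : Set ℂ} (hA : IsCompact A) : ∃ R : ℝ, 0 < R ∧ {z : ℂ | R < ‖z‖} ⊆ Aᶜ := by
  obtain ⟨R, hR, h⟩ := hA.isBounded.exists_pos_norm_le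
  exact ⟨R, hR, fun z hz hzA => not_lt.2 (h z hzA) hz⟩

theorem topHull_bounded {A : Set ℂ} (hA : IsCompact A) : Bornology.IsBounded (topHull A) := by
  obtain ⟨R, hR, h⟩ := exists_ext hA
  refine (isBounded_closedBall (x := (0:ℂ)) (r := R)).subset ?_
  intro z hz
  by_contra hzR
  have hzR' : z ∈ {z : ℂ | R < ‖z‖} := by simpa using hzR
  exact ext_unbounded R (Bornology.IsBounded.subset hz
    ((preconn_ext R hR).subset_connectedComponentIn hzR' h))

theorem isCompact_topHull {A : Set ℂ} (hA : IsCompact A) : IsCompact (topHull A) :=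
  Metric.isCompact_of_isClosed_isBounded (isClosed_topHull hA) (topHull_bounded hA)

theorem frontier_topHull {A : Set ℂ} (hA : IsCompact A) : frontier (topHull A) ⊆ A := by
  intro z hz
  by_contra hzA
  have hzh : z ∈ topHull A := (isClosed_topHull hA).frontier_subset hz
  apply hz.2
  rw [mem_interior_iff_mem_nhds]
  refine Filter.mem_of_superset ((hA.isClosed.isOpen_compl.connectedComponentIn).mem_nhds
    (mem_connectedComponentIn hzA)) ?_
  intro w hw
  simp only [topHull, mem_setOf_eq] at hzh ⊢
  rwa [← connectedComponentIn_eq hw]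

theorem topHull_mono {A B : Set ℂ} (h : A ⊆ B) : topHull A ⊆ topHull B := by
  intro z hz
  have hz' : Bornology.IsBounded (connectedComponentIn Bᶜ z) :=
    Bornology.IsBounded.subset (show Bornology.IsBounded (connectedComponentIn Aᶜ z) from hz)
      (connectedComponentIn_mono _ (compl_subset_compl.2 h))
  exact hz'

theorem topHull_idem {A : Set ℂ} : topHull (topHull A) ⊆ topHull A := by
  intro z hz
  by_contra hzn
  obtain ⟨h1, h2⟩ := comp_of_notMem hzn
  apply hzn
  have hz' : Bornology.IsBounded (connectedComponentIn Aᶜ z) :=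
    Bornology.IsBounded.subset
      (show Bornology.IsBounded (connectedComponentIn (topHull A)ᶜ z) from hz)
      (isPreconnected_connectedComponentIn.subset_connectedComponentIn
        h1 h2.subset_compl_right)
  exact hz'

theorem compl_preconn {Y : Set ℂ} (hY : IsCompact Y) (h : topHull Y ⊆ Y) : IsPreconnected Yᶜ := by
  obtain ⟨R, hR, hRY⟩ := exists_ext hY
  have key : ∀ z ∈ Yᶜ, {z : ℂ | R < ‖z‖} ⊆ connectedComponentIn Yᶜ z := by
    intro z hz
    have hzn : z ∉ topHull Y := fun hh => hz (h hh)
    have : ∃ w ∈ connectedComponentIn Yᶜ z, R < ‖w‖ := by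
      by_contra hcon
      push Not at hcon
      apply hzn
      refine (isBounded_closedBall (x := (0:ℂ)) (r := R)).subset ?_
      intro w hw
      simpa using hcon w hw
    obtain ⟨w, hw, hwR⟩ := this
    rw [connectedComponentIn_eq hw]
    exact (preconn_ext R hR).subset_connectedComponentIn hwR hRY
  obtain ⟨p, hp⟩ : ∃ p : ℂ, R < ‖p‖ := by
    refine ⟨((R + 1 : ℝ) : ℂ), ?_⟩
    rw [Complex.norm_real, Real.norm_eq_abs]
    exact lt_of_lt_of_le (by linarith) (le_abs_self _)
  have : Yᶜ = connectedComponentIn Yᶜ p := by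
    apply Subset.antisymm
    · intro z hz
      have := key z hz hp
      rw [← connectedComponentIn_eq this]
      exact mem_connectedComponentIn hz
    · exact connectedComponentIn_subset _ _
  rw [this]
  exact isPreconnected_connectedComponentIn

theorem exp_const {S : Type*} [TopologicalSpace S] {s : Set S} (hs : IsPreconnected s) {f : S → ℂ}
    (hf : ContinuousOn f s) (h : ∀ x ∈ s, Complex.exp (f x) = 1) {x y : S} (hx : x ∈ s)
    (hy : y ∈ s) : f x = f y := by
  refine Complex.isCoveringMap_exp.constOn_of_comp hs hf ?_ hx hy
  intro a ha b hb
  simp [h a ha, h b hb]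

theorem simplyConn_univ : IsSimplyConnected (univ : Set ℂ) := by
  have : ContractibleSpace (univ : Set ℂ) :=
    (Homeomorph.Set.univ ℂ).toHomotopyEquiv.contractibleSpace
  exact (inferInstance : SimplyConnectedSpace (univ : Set ℂ))

theorem log_on_plane {k : ℂ → ℂ} (hk : Continuous k) (h0 : ∀ z, k z ≠ 0) :
    ∃ c : ℂ → ℂ, Continuous c ∧ ∀ z, Complex.exp (c z) = k z := by
  obtain ⟨c, hc, h⟩ := Complex.exists_continuousOn_eqOn_exp_comp simplyConn_univ isOpen_univ
    hk.continuousOn (by rintro ⟨z, -, hz⟩; exact h0 z hz)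
  exact ⟨c, continuousOn_univ.1 hc, fun z => h (mem_univ z)⟩

theorem frontier_comp {A : Set ℂ} (hA : IsCompact A) (a : ℂ) :
    frontier (connectedComponentIn Aᶜ a) ⊆ A := by
  intro z hz
  by_contra hzA
  have ho := hA.isClosed.isOpen_compl.connectedComponentIn (x := z)
  have hm := mem_connectedComponentIn (show z ∈ Aᶜ from hzA)
  have := mem_closure_iff_nhds.1 hz.1 _ (ho.mem_nhds hm)
  obtain ⟨w, hw1, hw2⟩ := this
  apply hz.2
  rw [(hA.isClosed.isOpen_compl.connectedComponentIn).interior_eq]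
  rw [connectedComponentIn_eq hw2, ← connectedComponentIn_eq hw1]
  exact hm

theorem topHull_subset_disk {A V : Set ℂ} (hA : IsCompact A) (hV : IsTopDisk V) (hAV : A ⊆ V) :
    topHull A ⊆ V := by
  intro a ha
  by_contra haV
  have haA : a ∉ A := fun h => haV (hAV h)
  obtain ⟨l, hl, hle⟩ := Complex.exists_continuousOn_eqOn_exp_comp (U := V) hV.2.2 hV.1
    (g := fun z => z - a) (by fun_prop) (by
      rintro ⟨z, hz, h⟩
      exact haV (by rwa [← sub_eq_zero.1 h]))
  obtain ⟨L, hL⟩ := ContinuousMap.exists_restrict_eq (Y := ℂ) hA.isClosed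
    ⟨A.domRestrict l, continuousOn_iff_continuous_domRestrict.mp (hl.mono hAV)⟩
  have hL' : ∀ z ∈ A, L z = l z := fun z hz => by
    have := congrArg (fun f => f ⟨z, hz⟩) hL
    simpa using this
  set B := connectedComponentIn Aᶜ a with hB
  have haB : a ∈ B := mem_connectedComponentIn haA
  have hBb : Bornology.IsBounded B := ha
  classical
  let k : ℂ → ℂ := fun z => if z ∈ B then Complex.exp (L z) else z - a
  have hk : Continuous k := by
    apply Continuous.if
    · intro z hz
      have hzA := frontier_comp hA a hz
      rw [hL' z hzA]
      exact hle (hAV hzA)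
    · fun_prop
    · fun_prop
  have hk0 : ∀ z, k z ≠ 0 := by
    intro z
    simp only [k]
    split_ifs with h
    · exact Complex.exp_ne_zero _
    · intro h0
      exact h (by rwa [sub_eq_zero.1 h0])
  obtain ⟨c, hc, hce⟩ := log_on_plane hk hk0
  obtain ⟨R, hR, hRB⟩ := hBb.subset_ball_lt 0 a
  let u : ℝ → ℂ := fun t => c (a + R * Complex.exp (t * Complex.I)) - t * Complex.I - Real.log R
  have hu : Continuous u := by fun_prop
  have hu1 : ∀ t, Complex.exp (u t) = 1 := by
    intro t
    have hnB : a + R * Complex.exp (t * Complex.I) ∉ B := by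
      intro h
      have := hRB h
      rw [mem_ball, dist_eq_norm, add_sub_cancel_left, norm_mul, Complex.norm_exp_ofReal_mul_I,
        mul_one, Complex.norm_real, Real.norm_eq_abs, abs_of_pos hR] at this
      exact lt_irrefl _ this
    have hR0 : (R : ℂ) ≠ 0 := by exact_mod_cast hR.ne'
    simp only [u]
    rw [Complex.exp_sub, Complex.exp_sub, hce, ← Complex.ofReal_exp, Real.exp_log hR]
    simp only [k, if_neg hnB, add_sub_cancel_left]
    field_simp
  have := exp_const isPreconnected_univ hu.continuousOn (fun x _ => hu1 x) (mem_univ 0)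
    (mem_univ (2 * Real.pi))
  simp only [u] at this
  have e : Complex.exp (((2 * Real.pi : ℝ) : ℂ) * Complex.I) = 1 := by
    push_cast; exact Complex.exp_two_pi_mul_I
  rw [e] at this
  simp only [Complex.ofReal_zero, zero_mul, Complex.exp_zero, sub_zero] at this
  push_cast at this
  exact Complex.two_pi_I_ne_zero (by linear_combination this)

theorem diff_preconn {Y V : Set ℂ} (hV : IsTopDisk V) (hY : IsCompact Y) (hYV : Y ⊆ V)
    (hYc : IsPreconnected Yᶜ) : IsPreconnected (V ∩ Yᶜ) := by
  classical
  intro u v hu hv huv ⟨zu, hzu, hzu'⟩ ⟨zv, hzv, hzv'⟩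
  by_contra hcon
  have hdis : ∀ z ∈ V ∩ Yᶜ, z ∈ u → z ∉ v := fun z hz h1 h2 => hcon ⟨z, hz, h1, h2⟩
  set A : Set ℂ := V ∩ Yᶜ ∩ u with hAdef
  have hAo : IsOpen A := (hV.1.inter hY.isClosed.isOpen_compl).inter hu
  obtain ⟨W, hWo, hYW, hWV⟩ := normal_exists_closure_subset hY.isClosed hV.1 hYV
  obtain ⟨W2, hW2o, hWW2, hW2V⟩ := normal_exists_closure_subset isClosed_closure hV.1 hWV
  obtain ⟨φ, hφ0, hφ1, -⟩ := exists_continuous_zero_one_of_isClosed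
    (isClosed_closure (s := W)) hW2o.isClosed_compl
    (Set.disjoint_left.2 fun x h1 h2 => h2 (hWW2 h1))
  let a : ℂ → ℂ := fun z => if z ∈ A then (φ z : ℂ) else 0
  let b : ℂ → ℂ := fun z => if z ∈ A then (φ z : ℂ) - 1 else 0
  have hφc : Continuous fun z => (φ z : ℂ) := by fun_prop
  have hvn : ∀ z ∈ V, z ∉ Y → z ∉ A → ∀ᶠ w in 𝓝 z, w ∉ A := by
    intro z hz hzY hzA
    have hzv : z ∈ v := by
      rcases huv ⟨hz, hzY⟩ with h | h
      · exact absurd ⟨⟨hz, hzY⟩, h⟩ hzA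
      · exact h
    filter_upwards [hv.mem_nhds hzv] with w hw hwA
    exact hdis w hwA.1 hwA.2 hw
  have ha : ∀ z ∈ V, ContinuousAt a z := by
    intro z hz
    by_cases hzY : z ∈ Y
    · have : (fun _ => (0:ℂ)) =ᶠ[𝓝 z] a := by
        filter_upwards [hWo.mem_nhds (hYW hzY)] with w hw
        have : φ w = 0 := hφ0 (subset_closure hw)
        simp [a, this]
      exact continuousAt_const.congr this
    · by_cases hzA : z ∈ A
      · refine hφc.continuousAt.congr ?_
        filter_upwards [hAo.mem_nhds hzA] with w hw
        simp [a, hw]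
      · refine (continuousAt_const (y := (0:ℂ))).congr ?_
        filter_upwards [hvn z hz hzY hzA] with w hw
        simp [a, hw]
  have hb : ∀ z ∈ Yᶜ, ContinuousAt b z := by
    intro z hzY
    by_cases hz : z ∈ V
    · by_cases hzA : z ∈ A
      · refine (hφc.sub (continuous_const (y := (1:ℂ)))).continuousAt.congr ?_
        filter_upwards [hAo.mem_nhds hzA] with w hw
        simp [b, hw]
      · refine (continuousAt_const (y := (0:ℂ))).congr ?_
        filter_upwards [hvn z hz hzY hzA] with w hw
        simp [b, hw]
    · have : (fun _ => (0:ℂ)) =ᶠ[𝓝 z] b := by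
        have hz2 : z ∈ (closure W2)ᶜ := fun h => hz (hW2V h)
        filter_upwards [isClosed_closure.isOpen_compl.mem_nhds hz2] with w hw
        have : φ w = 1 := hφ1 (fun h => hw (subset_closure h))
        simp [b, this]
      exact continuousAt_const.congr this
  let k : ℂ → ℂ := fun z => Complex.exp (2 * Real.pi * Complex.I * a z)
  have hkb : ∀ z, k z = Complex.exp (2 * Real.pi * Complex.I * b z) := by
    intro z
    simp only [k, a, b]
    split_ifs with h
    · rw [mul_sub, Complex.exp_sub, mul_one, Complex.exp_two_pi_mul_I, div_one]
    · rfl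
  have hk : Continuous k := by
    rw [continuous_iff_continuousAt]
    intro z
    by_cases hz : z ∈ V
    · exact Complex.continuous_exp.continuousAt.comp (continuousAt_const.mul (ha z hz))
    · have hzY : z ∈ Yᶜ := fun h => hz (hYV h)
      rw [show k = fun z => Complex.exp (2 * Real.pi * Complex.I * b z) from funext hkb]
      exact Complex.continuous_exp.continuousAt.comp (continuousAt_const.mul (hb z hzY))
  obtain ⟨c, hc, hce⟩ := log_on_plane hk (fun z => Complex.exp_ne_zero _)
  have e1 := exp_const hV.2.1.isPreconnected (f := fun z => 2 * Real.pi * Complex.I * a z - c z)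
    (fun z hz => ((continuousAt_const.mul (ha z hz)).sub hc.continuousAt).continuousWithinAt)
    (fun z _ => by
      rw [Complex.exp_sub, hce]; exact div_self (Complex.exp_ne_zero _)) hzu.1 hzv.1
  have e2 := exp_const hYc (f := fun z => 2 * Real.pi * Complex.I * b z - c z)
    (fun z hz => ((continuousAt_const.mul (hb z hz)).sub hc.continuousAt).continuousWithinAt)
    (fun z _ => by
      rw [Complex.exp_sub, hce, hkb]; exact div_self (Complex.exp_ne_zero _)) hzu.2 hzv.2
  have hA1 : zu ∈ A := ⟨hzu, hzu'⟩
  have hA2 : zv ∉ A := fun h => hdis zv hzv h.2 hzv'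
  simp only [a, b, if_pos hA1, if_neg hA2] at e1 e2
  have : (2 * Real.pi * Complex.I : ℂ) = 0 := by linear_combination e1 - e2
  exact Complex.two_pi_I_ne_zero this

/-! ### Part B : the dynamics and the set `Y` -/

section PartB

variable {g : ℂ → ℂ} {U' U : Set ℂ} {d : ℕ}

theorem PLSetting.contAt (H : PLSetting g U' U d) {z : ℂ} (hz : z ∈ U') : ContinuousAt g z :=
  H.holo.continuousOn.continuousAt (H.disk'.1.mem_nhds hz)

theorem PLSetting.anal (H : PLSetting g U' U d) {z : ℂ} (hz : z ∈ U') : AnalyticAt ℂ g z :=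
  H.holo.analyticAt (H.disk'.1.mem_nhds hz)

theorem PLSetting.openMap (H : PLSetting g U' U d) : ∀ s ⊆ U', IsOpen s → IsOpen (g '' s) := by
  have ha : AnalyticOnNhd ℂ g U' := fun z hz => H.anal hz
  rcases ha.is_constant_or_isOpen H.disk'.2.1.isPreconnected with ⟨w, hw⟩ | h
  · exfalso
    have hsub : U ⊆ {w} := by
      intro u hu
      obtain ⟨z, hz, hzu⟩ := H.deg.1 u hu
      have : g z = u := hzu
      rw [← this]
      exact hw z hz
    obtain ⟨u, hu⟩ := H.disk.2.1.nonempty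
    have h1 : U = {w} := Subset.antisymm hsub (by
      have := hsub hu
      rw [mem_singleton_iff] at this
      rw [← this]
      exact singleton_subset_iff.2 hu)
    exact not_isOpen_singleton w (h1 ▸ H.disk.1)
  · exact h

theorem PLSetting.image_nhds (H : PLSetting g U' U d) {z : ℂ} (hz : z ∈ U') {N : Set ℂ}
    (hN : N ∈ 𝓝 z) : g '' (N ∩ U') ∈ 𝓝 (g z) := by
  have ho := H.openMap (interior N ∩ U') inter_subset_right (isOpen_interior.inter H.disk'.1)
  refine Filter.mem_of_superset (ho.mem_nhds ⟨z, ⟨mem_interior_iff_mem_nhds.2 hN, hz⟩, rfl⟩) ?_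
  exact image_mono (inter_subset_inter_left _ interior_subset)

theorem PLSetting.hull_fwd (H : PLSetting g U' U d) {A : Set ℂ} (hA : IsCompact A) (hAU : A ⊆ U')
    (hgA : MapsTo g A A) : MapsTo g (topHull A) (topHull A) := by
  have hhU : topHull A ⊆ U' := topHull_subset_disk hA H.disk' hAU
  have hK : IsCompact (g '' topHull A) :=
    (isCompact_topHull hA).image_of_continuousOn (H.holo.continuousOn.mono hhU)
  intro z hz
  by_contra hgz
  obtain ⟨h1, h2⟩ := comp_of_notMem hgz
  have := frontier_escape (K := g '' topHull A) isPreconnected_connectedComponentIn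
    ⟨g z, h1, z, hz, rfl⟩ (by
      intro w hw hwf
      obtain ⟨ζ, hζ, rfl⟩ := hK.isClosed.frontier_subset hwf
      have hζf : ζ ∈ frontier (topHull A) := by
        refine ⟨subset_closure hζ, fun hi => hwf.2 ?_⟩
        rw [mem_interior_iff_mem_nhds] at hi ⊢
        exact Filter.mem_of_superset (H.image_nhds (hhU hζ) hi) (image_mono inter_subset_left)
      have := hgA (frontier_topHull hA hζf)
      exact connectedComponentIn_subset _ _ hw this)
  exact hgz (show Bornology.IsBounded _ from hK.isBounded.subset this)

/-- The set `X_*` relative to a set `Q`. -/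
def Yset (g : ℂ → ℂ) (U' Q : Set ℂ) : Set ℂ := {x ∈ Q | grandOrbit g U' x ⊆ Q}

theorem Y_sub {Q : Set ℂ} : Yset g U' Q ⊆ Q := fun _ h => h.1

theorem Y_fwd {Q : Set ℂ} {x : ℂ} (hx : x ∈ Yset g U' Q) : g x ∈ Yset g U' Q := by
  refine ⟨hx.2 ⟨0, 1, by simp, by simp⟩, ?_⟩
  rintro z ⟨m, n, h1, h2⟩
  exact hx.2 ⟨m, n + 1, h1, by rw [h2, iterate_succ_apply]⟩

theorem Y_bwd {Q : Set ℂ} {z : ℂ} (hz : z ∈ U') (hgz : g z ∈ Yset g U' Q) : z ∈ Yset g U' Q := by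
  refine ⟨hgz.2 ⟨1, 0, by simpa using hz, by simp⟩, ?_⟩
  rintro w ⟨m, n, h1, h2⟩
  rcases n with _ | n
  · simp only [iterate_zero, id_eq] at h2
    refine hgz.2 ⟨m + 1, 0, ?_, ?_⟩
    · intro k hk
      rcases Nat.lt_succ_iff_lt_or_eq.1 hk with h | rfl
      · exact h1 k h
      · rw [h2]; exact hz
    · rw [iterate_succ_apply', h2]; rfl
  · exact hgz.2 ⟨m, n, h1, by rw [h2, iterate_succ_apply]⟩

theorem bwd_iter {Z : Set ℂ} (hZb : ∀ z ∈ U', g z ∈ Z → z ∈ Z) :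
    ∀ (m : ℕ) (w : ℂ), (∀ k < m, g^[k] w ∈ U') → g^[m] w ∈ Z → w ∈ Z := by
  intro m
  induction m with
  | zero => intro w _ h; simpa using h
  | succ m ih =>
    intro w h1 h2
    refine hZb w (by simpa using h1 0 (by omega)) (ih (g w) ?_ ?_)
    · intro k hk
      have := h1 (k + 1) (by omega)
      rwa [iterate_succ_apply] at this
    · rwa [iterate_succ_apply] at h2

theorem Y_max {Q Z : Set ℂ} (hZQ : Z ⊆ Q) (hZf : ∀ z ∈ Z, g z ∈ Z)
    (hZb : ∀ z ∈ U', g z ∈ Z → z ∈ Z) : Z ⊆ Yset g U' Q := by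
  intro x hx
  refine ⟨hZQ hx, ?_⟩
  rintro w ⟨m, n, h1, h2⟩
  have hn : g^[n] x ∈ Z := by
    clear h2
    induction n with
    | zero => simpa using hx
    | succ n ih => rw [iterate_succ_apply']; exact hZf _ ih
  exact hZQ (bwd_iter hZb m w h1 (h2 ▸ hn))

theorem PLSetting.closure_bwd (H : PLSetting g U' U d) {T : Set ℂ}
    (hT : ∀ z ∈ U', g z ∈ T → z ∈ T) : ∀ z ∈ U', g z ∈ closure T → z ∈ closure T := by
  intro z hz hgz
  rw [mem_closure_iff_nhds] at hgz ⊢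
  intro N hN
  obtain ⟨y, ⟨ζ, hζ, rfl⟩, hy⟩ := hgz _ (H.image_nhds hz hN)
  exact ⟨ζ, hζ.1, hT ζ hζ.2 hy⟩

theorem PLSetting.closure_fwd (H : PLSetting g U' U d) {T : Set ℂ} (hTU : closure T ⊆ U')
    (hT : ∀ z ∈ T, g z ∈ T) : ∀ z ∈ closure T, g z ∈ closure T := by
  intro z hz
  have := (H.contAt (hTU hz)).continuousWithinAt (s := T)
  exact closure_mono (by rintro _ ⟨y, hy, rfl⟩; exact hT y hy) (this.mem_closure_image hz)

theorem PLSetting.Y_closed (H : PLSetting g U' U d) {Q : Set ℂ} (hQ : IsClosed Q) (hQU : Q ⊆ U') :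
    IsClosed (Yset g U' Q) := by
  have hcl : closure (Yset g U' Q) ⊆ Q := closure_minimal Y_sub hQ
  refine isClosed_of_closure_subset (Y_max hcl ?_ ?_)
  · exact H.closure_fwd (hcl.trans hQU) (fun z hz => Y_fwd hz)
  · exact H.closure_bwd (fun z hz h => Y_bwd hz h)

theorem PLSetting.Y_hull (H : PLSetting g U' U d) {X : Set ℂ} (hX : IsCompact X) (hXU : X ⊆ U') :
    topHull (Yset g U' (topHull X)) ⊆ Yset g U' (topHull X) := by
  have hQU : topHull X ⊆ U' := topHull_subset_disk hX H.disk' hXU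
  have hQc := isCompact_topHull hX
  set Y := Yset g U' (topHull X) with hY
  have hYc : IsCompact Y := hQc.of_isClosed_subset (H.Y_closed hQc.isClosed hQU) Y_sub
  have hYQ : topHull Y ⊆ topHull X := (topHull_mono Y_sub).trans topHull_idem
  have hYU : topHull Y ⊆ U' := hYQ.trans hQU
  refine Y_max hYQ (H.hull_fwd hYc (Y_sub.trans hQU) (fun z hz => Y_fwd hz)) ?_
  intro z hz hgz
  by_contra hzn
  obtain ⟨h1, h2⟩ := comp_of_notMem hzn
  have hK : IsCompact (U' ∩ g ⁻¹' topHull Y) :=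
    H.proper _ (hYU.trans H.subset) (isCompact_topHull hYc)
  have := frontier_escape (K := U' ∩ g ⁻¹' topHull Y) isPreconnected_connectedComponentIn
    ⟨z, h1, hz, hgz⟩ (by
      intro w hw hwf
      have hwK := hK.isClosed.frontier_subset hwf
      have hgw : g w ∈ frontier (topHull Y) := by
        refine ⟨subset_closure hwK.2, fun hi => hwf.2 ?_⟩
        rw [mem_interior_iff_mem_nhds] at hi ⊢
        exact Filter.inter_mem (H.disk'.1.mem_nhds hwK.1) ((H.contAt hwK.1).preimage_mem_nhds hi)
      exact connectedComponentIn_subset _ _ hw (Y_bwd hwK.1 (frontier_topHull hYc hgw)))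
  exact hzn (show Bornology.IsBounded _ from hK.isBounded.subset this)

theorem PLSetting.crit_sub (_H : PLSetting g U' U d) : critPts g U' ⊆ postCrit g U' := by
  intro c hc
  exact subset_closure (mem_iUnion.2 ⟨0, c, hc, rfl⟩)

theorem PLSetting.post_fwd (H : PLSetting g U' U d) :
    ∀ z ∈ postCrit g U', g z ∈ postCrit g U' := by
  refine H.closure_fwd H.postCrit_subset ?_
  intro z hz
  obtain ⟨n, c, hc, rfl⟩ := mem_iUnion.1 hz
  exact mem_iUnion.2 ⟨n + 1, c, hc, iterate_succ_apply' g n c⟩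

end PartB

/-! ### Part C : a class of subharmonic functions -/

/-- A local form of subharmonicity. -/
def SHAt (s : ℂ → ℝ) (z0 : ℂ) : Prop :=
  (∀ y, s z0 < y → ∀ᶠ z in 𝓝 z0, s z < y) ∧
  ∀ f : ℂ → ℂ, AnalyticAt ℂ f z0 → (∀ᶠ z in 𝓝 z0, s z - (f z).re ≤ s z0 - (f z0).re) →
    ∀ᶠ z in 𝓝 z0, s z - (f z).re = s z0 - (f z0).re

theorem SHAt.touch {s t : ℂ → ℝ} {z0 : ℂ} (ht : SHAt t z0)
    (hs : ∀ y, s z0 < y → ∀ᶠ z in 𝓝 z0, s z < y)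
    (hle : ∀ᶠ z in 𝓝 z0, t z ≤ s z) (heq : t z0 = s z0) : SHAt s z0 := by
  refine ⟨hs, fun f hf h => ?_⟩
  have := ht.2 f hf (by
    filter_upwards [hle, h] with z h1 h2
    linarith)
  filter_upwards [hle, h, this] with z h1 h2 h3
  linarith

theorem SHAt.congr {s t : ℂ → ℝ} {z0 : ℂ} (ht : SHAt t z0) (h : ∀ᶠ z in 𝓝 z0, t z = s z) :
    SHAt s z0 := by
  refine ht.touch ?_ (h.mono fun z hz => hz.le) h.self_of_nhds
  intro y hy
  filter_upwards [h, ht.1 y (by rwa [h.self_of_nhds])] with z h1 h2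
  rwa [← h1]

theorem SHAt.sup {s t : ℂ → ℝ} {z0 : ℂ} (hs : SHAt s z0) (ht : SHAt t z0) :
    SHAt (fun z => max (s z) (t z)) z0 := by
  have husc : ∀ y, max (s z0) (t z0) < y → ∀ᶠ z in 𝓝 z0, max (s z) (t z) < y := by
    intro y hy
    filter_upwards [hs.1 y ((le_max_left _ _).trans_lt hy),
      ht.1 y ((le_max_right _ _).trans_lt hy)] with z h1 h2
    exact max_lt h1 h2
  rcases le_total (s z0) (t z0) with h | h
  · exact ht.touch husc (Eventually.of_forall fun z => le_max_right _ _) (max_eq_right h).symm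
  · exact hs.touch husc (Eventually.of_forall fun z => le_max_left _ _) (max_eq_left h).symm

theorem SHAt.zero (z0 : ℂ) : SHAt (fun _ => 0) z0 := by
  refine ⟨fun y hy => Eventually.of_forall fun z => hy, fun f hf h => ?_⟩
  rcases hf.eventually_constant_or_nhds_le_map_nhds with hc | ho
  · filter_upwards [hc] with z hz
    rw [hz]
  · exfalso
    have h1 : ∀ᶠ w in 𝓝 (f z0), (f z0).re ≤ w.re := by
      apply ho
      rw [mem_map]
      filter_upwards [h] with z hz
      show (f z0).re ≤ (f z).re
      linarith
    obtain ⟨ε, hε, hb⟩ := Metric.eventually_nhds_iff.1 h1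
    have := hb (y := f z0 - ((ε / 2 : ℝ) : ℂ)) (by
      rw [dist_eq_norm, sub_sub_cancel_left, norm_neg, Complex.norm_real, Real.norm_eq_abs,
        abs_of_pos (by linarith)]
      linarith)
    simp only [Complex.sub_re, Complex.ofReal_re] at this
    linarith

theorem SHAt.add_re {s u : ℂ → ℝ} {h : ℂ → ℂ} {z0 : ℂ} (hs : SHAt s z0) (hh : AnalyticAt ℂ h z0)
    (hu : ∀ᶠ z in 𝓝 z0, u z = s z + (h z).re) : SHAt u z0 := by
  have hu0 := hu.self_of_nhds
  constructor
  · intro y hy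
    rw [hu0] at hy
    set e := (y - (s z0 + (h z0).re)) / 2 with he
    have hpos : 0 < e := by simp only [e]; linarith
    have hcont : ContinuousAt (fun z => (h z).re) z0 :=
      Complex.continuous_re.continuousAt.comp hh.continuousAt
    have h1 := hcont.eventually (gt_mem_nhds (show (h z0).re < (h z0).re + e by linarith))
    filter_upwards [hu, hs.1 (s z0 + e) (by linarith), h1] with z a b c
    rw [a]
    have : y = s z0 + (h z0).re + e + e := by simp only [e]; ring
    linarith
  · intro f hf hle
    have := hs.2 (fun z => f z - h z) (hf.sub hh) (by
      filter_upwards [hu, hle] with z a b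
      simp only [Complex.sub_re]
      linarith)
    filter_upwards [hu, this] with z a b
    simp only [Complex.sub_re] at b
    linarith

theorem SHAt.smul {s : ℂ → ℝ} {z0 : ℂ} (hs : SHAt s z0) {c : ℝ} (hc : 0 < c) :
    SHAt (fun z => c * s z) z0 := by
  constructor
  · intro y hy
    filter_upwards [hs.1 (y / c) (by rwa [lt_div_iff₀' hc])] with z hz
    rwa [lt_div_iff₀' hc] at hz
  · intro f hf h
    have hre : ∀ z, (((c⁻¹ : ℝ) : ℂ) * f z).re = c⁻¹ * (f z).re := fun z => by
      rw [Complex.re_ofReal_mul]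
    have := hs.2 (fun z => ((c⁻¹ : ℝ) : ℂ) * f z) (analyticAt_const.mul hf) (by
      filter_upwards [h] with z hz
      rw [hre, hre]
      have := mul_le_mul_of_nonneg_left hz (inv_nonneg.2 hc.le)
      rw [mul_sub, mul_sub, inv_mul_cancel_left₀ hc.ne', inv_mul_cancel_left₀ hc.ne'] at this
      exact this)
    filter_upwards [this] with z hz
    rw [hre, hre] at hz
    have := congrArg (fun t => c * t) hz
    simp only [mul_sub, mul_inv_cancel_left₀ hc.ne'] at this
    exact this

theorem SHAt.add_const {s : ℂ → ℝ} {z0 : ℂ} (hs : SHAt s z0) (c : ℝ) :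
    SHAt (fun z => s z + c) z0 :=
  hs.add_re (h := fun _ => (c : ℂ)) analyticAt_const (Eventually.of_forall fun z => by simp)

theorem log_norm_eq {m : ℂ → ℂ} {z0 : ℂ} (hm : AnalyticAt ℂ m z0) (h0 : m z0 ≠ 0) :
    ∃ h : ℂ → ℂ, AnalyticAt ℂ h z0 ∧ ∀ᶠ z in 𝓝 z0, Real.log ‖m z‖ = (h z).re := by
  refine ⟨fun z => Complex.log (m z / m z0) + (Real.log ‖m z0‖ : ℂ), ?_, ?_⟩
  · refine AnalyticAt.add (AnalyticAt.clog (hm.div analyticAt_const h0) ?_) analyticAt_const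
    rw [div_self h0]
    exact Complex.one_mem_slitPlane
  · filter_upwards [hm.continuousAt.eventually_ne h0] with z hz
    rw [Complex.add_re, Complex.log_re, Complex.ofReal_re, norm_div,
      Real.log_div (norm_ne_zero_iff.2 hz) (norm_ne_zero_iff.2 h0)]
    ring

theorem SHAt.add_log {s : ℂ → ℝ} {m : ℂ → ℂ} {z0 : ℂ} (hs : SHAt s z0) (hm : AnalyticAt ℂ m z0)
    (h0 : m z0 ≠ 0) (c : ℝ) : SHAt (fun z => s z + c * Real.log ‖m z‖) z0 := by
  obtain ⟨h, hh, he⟩ := log_norm_eq hm h0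
  refine hs.add_re (h := fun z => (c : ℂ) * h z) (analyticAt_const.mul hh) ?_
  filter_upwards [he] with z hz
  rw [hz, Complex.re_ofReal_mul]

/-- usc functions attain their maximum on compact sets -/
theorem usc_max {t : ℂ → ℝ} {K : Set ℂ} (hK : IsCompact K) (hne : K.Nonempty)
    (hu : ∀ z ∈ K, ∀ y, t z < y → ∀ᶠ w in 𝓝[K] z, t w < y) : ∃ z ∈ K, ∀ w ∈ K, t w ≤ t z := by
  by_contra hcon
  push Not at hcon
  choose! b hb hbt using hcon
  obtain ⟨T, hT, hcov⟩ := hK.elim_nhdsWithin_subcover (fun z => {w | t w < t (b z)})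
    (fun z hz => hu z hz _ (hbt z hz))
  have hTne : T.Nonempty := by
    obtain ⟨z, hz⟩ := hne
    obtain ⟨i, hi, -⟩ := mem_iUnion₂.1 (hcov hz)
    exact ⟨i, hi⟩
  obtain ⟨i, hi, hmax⟩ := T.exists_max_image (fun z => t (b z)) hTne
  obtain ⟨j, hj, hlt⟩ := mem_iUnion₂.1 (hcov (hb i (hT i hi)))
  have : t (b i) < t (b j) := hlt
  exact absurd (hmax j hj) (not_le.2 this)

theorem max_principle {t : ℂ → ℝ} {K O : Set ℂ} (hK : IsCompact K) (hO : IsOpen O) (hOK : O ⊆ K)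
    (hu : ∀ z ∈ K, ∀ y, t z < y → ∀ᶠ w in 𝓝[K] z, t w < y)
    (hsh : ∀ z ∈ O, SHAt t z) {c : ℝ} (hc : ∀ z ∈ K, z ∉ O → t z ≤ c) : ∀ z ∈ K, t z ≤ c := by
  intro z hz
  by_contra hzc
  push Not at hzc
  obtain ⟨p, hp, hmax⟩ := usc_max hK ⟨z, hz⟩ hu
  have hpc : c < t p := hzc.trans_le (hmax z hz)
  set E : Set ℂ := {w | w ∈ K ∧ t p ≤ t w} with hE
  have hEO : E ⊆ O := by
    intro w hw
    by_contra hwO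
    linarith [hc w hw.1 hwO, hw.2]
  have hEo : IsOpen E := by
    rw [isOpen_iff_mem_nhds]
    intro w hw
    have hwO := hEO hw
    have heq : t w = t p := le_antisymm (hmax w hw.1) hw.2
    have := (hsh w hwO).2 (fun _ => 0) analyticAt_const (by
      filter_upwards [hO.mem_nhds hwO] with v hv
      simp only [Complex.zero_re, sub_zero]
      rw [heq]; exact hmax v (hOK hv))
    filter_upwards [this, hO.mem_nhds hwO] with v hv hvO
    simp only [Complex.zero_re, sub_zero] at hv
    exact ⟨hOK hvO, by rw [hv, heq]⟩
  have hEc : IsClosed E := by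
    rw [← isOpen_compl_iff, isOpen_iff_mem_nhds]
    intro w hw
    by_cases hwK : w ∈ K
    · have hlt : t w < t p := by
        by_contra h
        exact hw ⟨hwK, not_lt.1 h⟩
      have := hu w hwK _ hlt
      rw [eventually_nhdsWithin_iff] at this
      filter_upwards [this] with v hv hvE
      exact absurd (hv hvE.1) (not_lt.2 hvE.2)
    · filter_upwards [hK.isClosed.isOpen_compl.mem_nhds hwK] with v hv hvE
      exact hv hvE.1
  have : E = univ := IsClopen.eq_univ ⟨hEc, hEo⟩ ⟨p, hp, le_rfl⟩
  have hKu : K = univ := eq_univ_of_univ_subset (this ▸ fun w hw => hw.1)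
  exact noncompact_univ ℂ (hKu ▸ hK)

/-- The class of competitors. -/
structure InS (V F : Set ℂ) (s : ℂ → ℝ) : Prop where
  nonneg : ∀ z ∈ V, 0 ≤ s z
  le_one : ∀ z ∈ V, s z ≤ 1
  zero : ∀ z ∈ F, s z = 0
  sh : ∀ z ∈ V, SHAt s z

theorem InS.mono {V V' F : Set ℂ} {s : ℂ → ℝ} (hs : InS V F s) (h : V' ⊆ V) : InS V' F s :=
  ⟨fun z hz => hs.nonneg z (h hz), fun z hz => hs.le_one z (h hz), hs.zero,
    fun z hz => hs.sh z (h hz)⟩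

theorem InS.const_zero (V F : Set ℂ) : InS V F (fun _ => 0) :=
  ⟨fun _ _ => le_rfl, fun _ _ => zero_le_one, fun _ _ => rfl, fun z _ => SHAt.zero z⟩

theorem InS.sup {V F : Set ℂ} {s t : ℂ → ℝ} (hs : InS V F s) (ht : InS V F t) :
    InS V F (fun z => max (s z) (t z)) :=
  ⟨fun z hz => (hs.nonneg z hz).trans (le_max_left _ _),
    fun z hz => max_le (hs.le_one z hz) (ht.le_one z hz),
    fun z hz => by simp [hs.zero z hz, ht.zero z hz],
    fun z hz => (hs.sh z hz).sup (ht.sh z hz)⟩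

theorem SHAt.usc_within {s : ℂ → ℝ} {K : Set ℂ} (h : ∀ z ∈ K, SHAt s z) :
    ∀ z ∈ K, ∀ y, s z < y → ∀ᶠ w in 𝓝[K] z, s w < y :=
  fun z hz y hy => mem_nhdsWithin_of_mem_nhds ((h z hz).1 y hy)

/-- Push-forward of a function under `g`. -/
def pushS (g : ℂ → ℂ) (U' : Set ℂ) (s : ℂ → ℝ) (w : ℂ) : ℝ := sSup (s '' (U' ∩ g ⁻¹' {w}))

theorem PLSetting.push_max {g : ℂ → ℂ} {U' U : Set ℂ} {d : ℕ} (H : PLSetting g U' U d)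
    {F : Set ℂ} {s : ℂ → ℝ} (hs : InS U' F s) {w : ℂ} (hw : w ∈ U) :
    ∃ ζ ∈ U', g ζ = w ∧ pushS g U' s w = s ζ ∧ ∀ z ∈ U', g z = w → s z ≤ s ζ := by
  have hK : IsCompact (U' ∩ g ⁻¹' {w}) := H.proper _ (singleton_subset_iff.2 hw) isCompact_singleton
  obtain ⟨ζ, hζ, hmax⟩ := usc_max hK (H.deg.1 w hw)
    (SHAt.usc_within (fun z hz => hs.sh z hz.1))
  refine ⟨ζ, hζ.1, hζ.2, ?_, fun z hz hgz => hmax z ⟨hz, hgz⟩⟩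
  apply IsGreatest.csSup_eq
  refine ⟨⟨ζ, hζ, rfl⟩, ?_⟩
  rintro _ ⟨z, hz, rfl⟩
  exact hmax z hz

theorem PLSetting.push {g : ℂ → ℂ} {U' U : Set ℂ} {d : ℕ} (H : PLSetting g U' U d)
    {F : Set ℂ} {s : ℂ → ℝ} (hFU : F ⊆ U) (hF : ∀ z ∈ U', g z ∈ F → z ∈ F) (hs : InS U' F s) :
    InS U F (pushS g U' s) ∧ ∀ z ∈ U', s z ≤ pushS g U' s (g z) := by
  have hge : ∀ z ∈ U', s z ≤ pushS g U' s (g z) := by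
    intro z hz
    obtain ⟨ζ, h1, h2, h3, h4⟩ := H.push_max hs (H.mapsTo hz)
    rw [h3]
    exact h4 z hz rfl
  refine ⟨⟨?_, ?_, ?_, ?_⟩, hge⟩
  · intro w hw
    obtain ⟨ζ, h1, h2, h3, h4⟩ := H.push_max hs hw
    rw [h3]; exact hs.nonneg ζ h1
  · intro w hw
    obtain ⟨ζ, h1, h2, h3, h4⟩ := H.push_max hs hw
    rw [h3]; exact hs.le_one ζ h1
  · intro w hw
    obtain ⟨ζ, h1, h2, h3, h4⟩ := H.push_max hs (hFU hw)
    rw [h3]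
    exact hs.zero ζ (hF ζ h1 (by rwa [h2]))
  · intro w hw
    obtain ⟨ζ, h1, h2, h3, h4⟩ := H.push_max hs hw
    constructor
    · intro y hy
      obtain ⟨ε, hε, hb⟩ := Metric.nhds_basis_closedBall.mem_iff.1 (H.disk.1.mem_nhds hw)
      have hKc : IsCompact (U' ∩ g ⁻¹' closedBall w ε) := H.proper _ hb (isCompact_closedBall w ε)
      set N : Set ℂ := {z | s z < y} with hN
      have hK2 : IsCompact ((U' ∩ g ⁻¹' closedBall w ε) \ interior N) := hKc.diff isOpen_interior
      have hK3 : IsCompact (g '' ((U' ∩ g ⁻¹' closedBall w ε) \ interior N)) :=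
        hK2.image_of_continuousOn (H.holo.continuousOn.mono fun z hz => hz.1.1)
      have hwn : w ∉ g '' ((U' ∩ g ⁻¹' closedBall w ε) \ interior N) := by
        rintro ⟨z, hz, hzw⟩
        apply hz.2
        rw [mem_interior_iff_mem_nhds]
        exact (hs.sh z hz.1.1).1 y ((h4 z hz.1.1 hzw).trans_lt (h3 ▸ hy))
      filter_upwards [hK3.isClosed.isOpen_compl.mem_nhds hwn, closedBall_mem_nhds w hε] with v hv hvb
      obtain ⟨ξ, k1, k2, k3, k4⟩ := H.push_max hs (hb hvb)
      rw [k3]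
      by_contra hlt
      apply hv
      refine ⟨ξ, ⟨⟨k1, by rw [mem_preimage, k2]; exact hvb⟩, fun hi => hlt ?_⟩, k2⟩
      have hi2 : ξ ∈ N := interior_subset hi
      exact hi2
    · intro f hf hle
      subst h2
      have hga := H.anal h1
      have := (hs.sh ζ h1).2 (fun z => f (g z)) (AnalyticAt.comp' hf hga) (by
        filter_upwards [(H.contAt h1).eventually hle, H.disk'.1.mem_nhds h1] with z hz hzU
        have := hge z hzU
        rw [h3] at hz
        linarith)
      filter_upwards [hle, H.image_nhds h1 this] with v hv hv2
      obtain ⟨z, ⟨hz, hzU⟩, rfl⟩ := hv2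
      have := hge z hzU
      have hz' : s z - (f (g z)).re = s ζ - (f (g ζ)).re := hz
      rw [h3] at hv ⊢
      linarith

/-! ### Part D : propagation of estimates -/

theorem SHAt.glue {s u : ℂ → ℝ} {Ω : Set ℂ} [DecidablePred (· ∈ Ω)] (hΩ : IsOpen Ω) {w : ℂ}
    (hs : SHAt s w) (hu : w ∈ closure Ω → SHAt u w) (hle : w ∈ frontier Ω → u w ≤ s w) :
    SHAt (fun z => if z ∈ Ω then max (s z) (u z) else s z) w := by
  by_cases hw : w ∈ Ω
  · refine (hs.sup (hu (subset_closure hw))).congr ?_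
    filter_upwards [hΩ.mem_nhds hw] with z hz
    rw [if_pos hz]
  · refine hs.touch ?_ (Eventually.of_forall fun z => ?_) (by rw [if_neg hw])
    · intro y hy
      simp only [if_neg hw] at hy
      by_cases hwc : w ∈ closure Ω
      · have hf : w ∈ frontier Ω := ⟨hwc, fun h => hw (interior_subset h)⟩
        filter_upwards [hs.1 y hy, (hu hwc).1 y ((hle hf).trans_lt hy)] with z h1 h2
        split_ifs
        · exact max_lt h1 h2
        · exact h1
      · filter_upwards [isClosed_closure.isOpen_compl.mem_nhds hwc, hs.1 y hy] with z h1 h2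
        rw [if_neg fun h => h1 (subset_closure h)]
        exact h2
    ·
      split_ifs
      · exact le_max_left _ _
      · exact le_rfl

/-- the harmonic function on an annulus -/
def lam (p : ℂ) (ρ R : ℝ) (z : ℂ) : ℝ := (Real.log R - Real.log ‖z - p‖) / (Real.log R - Real.log ρ)

theorem lam_den {ρ R : ℝ} (hρ : 0 < ρ) (hR : ρ < R) : 0 < Real.log R - Real.log ρ :=
  sub_pos.2 (Real.log_lt_log hρ hR)

theorem lam_R {p z : ℂ} {ρ R : ℝ} (h : ‖z - p‖ = R) : lam p ρ R z = 0 := by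
  simp [lam, h]

theorem lam_rho {p z : ℂ} {ρ R : ℝ} (hρ : 0 < ρ) (hR : ρ < R) (h : ‖z - p‖ = ρ) :
    lam p ρ R z = 1 := by
  rw [lam, h]
  exact div_self (lam_den hρ hR).ne'

theorem lam_ge {p z : ℂ} {ρ R r : ℝ} (hρ : 0 < ρ) (hR : ρ < R) (h1 : ρ ≤ ‖z - p‖)
    (h2 : ‖z - p‖ ≤ r) :
    (Real.log R - Real.log r) / (Real.log R - Real.log ρ) ≤ lam p ρ R z := by
  rw [lam]
  have := Real.log_le_log (hρ.trans_le h1) h2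
  exact div_le_div_of_nonneg_right (by linarith) (lam_den hρ hR).le

theorem SHAt.add_lam {s : ℂ → ℝ} {z p : ℂ} {ρ R η : ℝ} (hs : SHAt s z) (hz : z ≠ p) :
    SHAt (fun w => s w + η * lam p ρ R w) z := by
  have h1 := (hs.add_log (m := fun w => w - p) (by fun_prop) (sub_ne_zero.2 hz)
    (-(η / (Real.log R - Real.log ρ)))).add_const (η * Real.log R / (Real.log R - Real.log ρ))
  refine h1.congr (Eventually.of_forall fun w => ?_)
  simp only [lam]
  ring

theorem annulus_bound {t : ℂ → ℝ} {p : ℂ} {ρ R η : ℝ} (hρ : 0 < ρ) (hR : ρ < R)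
    (hsh : ∀ z ∈ closedBall p R, SHAt t z) (h1 : ∀ z ∈ closedBall p R, t z ≤ 1)
    (h2 : ∀ z ∈ closedBall p ρ, t z ≤ 1 - η) :
    ∀ z, ρ ≤ ‖z - p‖ → ‖z - p‖ ≤ R → t z + η * lam p ρ R z ≤ 1 := by
  have hK : IsCompact (closedBall p R \ ball p ρ) := (isCompact_closedBall p R).diff isOpen_ball
  have hne : ∀ z ∈ closedBall p R \ ball p ρ, z ≠ p := by
    rintro z hz rfl
    exact hz.2 (mem_ball_self hρ)
  have hS : ∀ z ∈ closedBall p R \ ball p ρ, SHAt (fun w => t w + η * lam p ρ R w) z :=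
    fun z hz => (hsh z hz.1).add_lam (hne z hz)
  have := max_principle (O := ball p R \ closedBall p ρ) hK
    (isOpen_ball.sdiff isClosed_closedBall)
    (fun z hz => ⟨ball_subset_closedBall hz.1, fun h => hz.2 (ball_subset_closedBall h)⟩)
    (SHAt.usc_within hS)
    (fun z hz => hS z ⟨ball_subset_closedBall hz.1, fun h => hz.2 (ball_subset_closedBall h)⟩)
    (c := 1) (by
      intro z hz hzO
      have hzK := hz
      simp only [Set.mem_sdiff, mem_closedBall, mem_ball, dist_eq_norm, not_lt, not_le, not_and] at hz hzO
      rcases lt_or_ge ‖z - p‖ R with h | h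
      · have h3 : ‖z - p‖ = ρ := le_antisymm (not_lt.1 fun h' => not_le.2 h' (by
          by_contra hcc
          exact absurd (hzO h) (by simpa using h'))) hz.2
        rw [lam_rho hρ hR h3]
        have := h2 z (by rw [mem_closedBall, dist_eq_norm, h3])
        linarith
      · rw [lam_R (le_antisymm hz.1 h)]
        have := h1 z hzK.1
        linarith)
  intro z hz1 hz2
  exact this z ⟨by rwa [mem_closedBall, dist_eq_norm], by
    rw [mem_ball, dist_eq_norm]; exact not_lt.2 hz1⟩

theorem propagate {S G : Set ℂ} (hS : IsPreconnected S) (hG : IsOpen G) (hne : (S ∩ G).Nonempty)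
    (hcl : ∀ z ∈ S, z ∈ closure G → z ∈ G) : S ⊆ G :=
  frontier_escape hS hne fun z hz hf => hf.2 (by
    rw [hG.interior_eq]; exact hcl z hz hf.1)

/-- choosing a good centre near a point of the closure of an open set -/
theorem good_centre {V : Set ℂ} (hV : IsOpen V) {z : ℂ} (hz : z ∈ V) {G : Set ℂ}
    (hcl : z ∈ closure G) :
    ∃ p ∈ G, ∃ r > 0, closedBall p (2 * r) ⊆ V ∧ z ∈ ball p r := by
  obtain ⟨δ, hδ, hb⟩ := Metric.nhds_basis_closedBall.mem_iff.1 (hV.mem_nhds hz)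
  obtain ⟨p, hp, hpz⟩ := Metric.mem_closure_iff.1 hcl (δ / 3) (by linarith)
  refine ⟨p, hp, δ / 3, by linarith, fun w hw => hb ?_, hpz⟩
  rw [mem_closedBall] at hw ⊢
  have := dist_triangle w p z
  rw [dist_comm] at hpz
  linarith

/-- uniform upper bounds -/
theorem upper_bound {V F : Set ℂ} (hV : IsOpen V) (hVc : IsPreconnected V) (hFV : F ⊆ V)
    (hFi : (interior F).Nonempty) {K : Set ℂ} (hK : IsCompact K) (hKV : K ⊆ V) :
    ∃ η > 0, ∀ s, InS V F s → ∀ w ∈ K, s w ≤ 1 - η := by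
  set G : Set ℂ := {z | ∃ N ∈ 𝓝 z, ∃ η > (0:ℝ), ∀ s, InS V F s → ∀ w ∈ N, s w ≤ 1 - η} with hG
  have hGo : IsOpen G := by
    rw [isOpen_iff_mem_nhds]
    rintro z ⟨N, hN, η, hη, h⟩
    filter_upwards [eventually_mem_nhds_iff.2 hN] with w hw
    exact ⟨N, hw, η, hη, h⟩
  have hVG : V ⊆ G := by
    refine propagate hVc hGo ?_ ?_
    · obtain ⟨x, hx⟩ := hFi
      refine ⟨x, hFV (interior_subset hx), F, mem_interior_iff_mem_nhds.1 hx, 1, one_pos, ?_⟩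
      intro s hs w hw
      rw [hs.zero w hw]; norm_num
    · intro z hz hcl
      obtain ⟨p, ⟨N, hN, η, hη, h⟩, r, hr, hball, hzp⟩ := good_centre hV hz hcl
      obtain ⟨δ, hδ, hδN⟩ := Metric.nhds_basis_closedBall.mem_iff.1 hN
      set ρ := min δ r with hρdef
      have hρ : 0 < ρ := lt_min hδ hr
      have hρr : ρ ≤ r := min_le_right _ _
      have hR : ρ < 2 * r := by linarith
      have hden := lam_den hρ hR
      set l := (Real.log (2 * r) - Real.log r) / (Real.log (2 * r) - Real.log ρ) with hl
      have hlpos : 0 < l := div_pos (sub_pos.2 (Real.log_lt_log hr (by linarith))) hden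
      have hl1 : l ≤ 1 := by
        rw [hl, div_le_one hden]
        linarith [Real.log_le_log hρ hρr]
      refine ⟨ball p r, isOpen_ball.mem_nhds hzp, η * l, mul_pos hη hlpos, ?_⟩
      intro s hs w hw
      have hw' : ‖w - p‖ < r := by rwa [mem_ball, dist_eq_norm] at hw
      rcases le_total ‖w - p‖ ρ with hc | hc
      · have := h s hs w (hδN (by
          rw [mem_closedBall, dist_eq_norm]; exact hc.trans (min_le_left _ _)))
        have h3 : η * l ≤ η * 1 := mul_le_mul_of_nonneg_left hl1 hη.le
        linarith
      · have := annulus_bound (η := η) hρ hR (fun z hz => hs.sh z (hball hz))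
          (fun z hz => hs.le_one z (hball hz))
          (fun z hz => h s hs z (hδN (closedBall_subset_closedBall (min_le_left _ _) hz)))
          w hc (by linarith)
        have h3 := mul_le_mul_of_nonneg_left (lam_ge hρ hR hc hw'.le) hη.le
        linarith
  refine hK.induction_on (p := fun K => ∃ η > 0, ∀ s, InS V F s → ∀ w ∈ K, s w ≤ 1 - η)
    ⟨1, one_pos, by simp⟩ ?_ ?_ ?_
  · rintro A B hAB ⟨η, hη, h⟩
    exact ⟨η, hη, fun s hs w hw => h s hs w (hAB hw)⟩
  · rintro A B ⟨η, hη, h⟩ ⟨η', hη', h'⟩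
    refine ⟨min η η', lt_min hη hη', ?_⟩
    rintro s hs w (hw | hw)
    · linarith [h s hs w hw, min_le_left η η']
    · linarith [h' s hs w hw, min_le_right η η']
  · intro z hz
    obtain ⟨N, hN, η, hη, h⟩ := hVG (hKV hz)
    exact ⟨N, mem_nhdsWithin_of_mem_nhds hN, η, hη, h⟩

/-- a set on which the gap property holds uniformly -/
def GapOn (U' U F N : Set ℂ) : Prop :=
  ∃ η > (0:ℝ), ∀ s, InS U F s → ∃ s', InS U' F s' ∧ (∀ w ∈ U', s w ≤ s' w) ∧ ∀ w ∈ N, s w + η ≤ s' w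

theorem GapOn.mono {U' U F N N' : Set ℂ} (h : GapOn U' U F N) (hN : N' ⊆ N) : GapOn U' U F N' := by
  obtain ⟨η, hη, h⟩ := h
  refine ⟨η, hη, fun s hs => ?_⟩
  obtain ⟨s', h1, h2, h3⟩ := h s hs
  exact ⟨s', h1, h2, fun w hw => h3 w (hN hw)⟩

theorem GapOn.union {U' U F N N' : Set ℂ} (h : GapOn U' U F N) (h' : GapOn U' U F N') :
    GapOn U' U F (N ∪ N') := by
  obtain ⟨η, hη, h⟩ := h
  obtain ⟨η', hη', h'⟩ := h'
  refine ⟨min η η', lt_min hη hη', fun s hs => ?_⟩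
  obtain ⟨t, h1, h2, h3⟩ := h s hs
  obtain ⟨t', h1', h2', h3'⟩ := h' s hs
  refine ⟨_, h1.sup h1', fun w hw => (h2 w hw).trans (le_max_left _ _), ?_⟩
  rintro w (hw | hw)
  · exact le_trans (by linarith [h3 w hw, min_le_left η η']) (le_max_left _ _)
  · exact le_trans (by linarith [h3' w hw, min_le_right η η']) (le_max_right _ _)

theorem GapOn.empty {U' U F : Set ℂ} (h : U' ⊆ U) : GapOn U' U F ∅ :=
  ⟨1, one_pos, fun s hs => ⟨s, hs.mono h, fun _ _ => le_rfl, by simp⟩⟩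

theorem gap_propagate {U' U F S : Set ℂ} (hU' : IsOpen U') (hUU : U' ⊆ U) (hF : IsClosed F)
    (hS : IsPreconnected S) (hSU : S ⊆ U') (hSF : ∀ z ∈ S, z ∉ F) {p' : ℂ} (hp' : p' ∈ S)
    (hgap : ∃ N ∈ 𝓝 p', GapOn U' U F N) : ∀ z ∈ S, ∃ N ∈ 𝓝 z, GapOn U' U F N := by
  classical
  set G : Set ℂ := {z | ∃ N ∈ 𝓝 z, GapOn U' U F N} with hG
  have hGo : IsOpen G := by
    rw [isOpen_iff_mem_nhds]
    rintro z ⟨N, hN, h⟩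
    filter_upwards [eventually_mem_nhds_iff.2 hN] with w hw
    exact ⟨N, hw, h⟩
  suffices h : S ⊆ G from fun z hz => h hz
  refine propagate hS hGo ⟨p', hp', hgap⟩ ?_
  intro z hz hcl
  obtain ⟨p, ⟨N, hN, η, hη, h⟩, r, hr, hball, hzp⟩ :=
    good_centre (hU'.inter hF.isOpen_compl) ⟨hSU hz, hSF z hz⟩ hcl
  obtain ⟨δ, hδ, hδN⟩ := Metric.nhds_basis_closedBall.mem_iff.1 hN
  set ρ := min δ r with hρdef
  have hρ : 0 < ρ := lt_min hδ hr
  have hρr : ρ ≤ r := min_le_right _ _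
  have hR : ρ < 2 * r := by linarith
  have hden := lam_den hρ hR
  set l := (Real.log (2 * r) - Real.log r) / (Real.log (2 * r) - Real.log ρ) with hl
  have hlpos : 0 < l := div_pos (sub_pos.2 (Real.log_lt_log hr (by linarith))) hden
  have hl1 : l ≤ 1 := by
    rw [hl, div_le_one hden]
    linarith [Real.log_le_log hρ hρr]
  refine ⟨ball p r, isOpen_ball.mem_nhds hzp, η * l, mul_pos hη hlpos, ?_⟩
  intro s hs
  obtain ⟨s1, hs1, hle, hgap1⟩ := h s hs
  have hsρ : ∀ w ∈ closedBall p ρ, s w + η ≤ s1 w := fun w hw =>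
    hgap1 w (hδN (closedBall_subset_closedBall (min_le_left _ _) hw))
  have hρ2 : closedBall p ρ ⊆ closedBall p (2 * r) := closedBall_subset_closedBall hR.le
  have hann := annulus_bound (η := η) hρ hR (fun z hz => hs.sh z (hUU (hball hz).1))
    (fun z hz => hs.le_one z (hUU (hball hz).1))
    (fun z hz => by linarith [hsρ z hz, hs1.le_one z (hball (hρ2 hz)).1])
  set Ω : Set ℂ := ball p (2 * r) \ closedBall p ρ with hΩ
  have hΩo : IsOpen Ω := isOpen_ball.sdiff isClosed_closedBall
  have hΩc : closure Ω ⊆ closedBall p (2 * r) \ ball p ρ := by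
    refine closure_minimal ?_ (isClosed_closedBall.sdiff isOpen_ball)
    exact fun z hz => ⟨ball_subset_closedBall hz.1, fun h => hz.2 (ball_subset_closedBall h)⟩
  have hsub : ∀ w ∈ U', s1 w ≤ (if w ∈ Ω then max (s1 w) (s w + η * lam p ρ (2 * r) w) else s1 w) := by
    intro w _
    split_ifs
    · exact le_max_left _ _
    · exact le_rfl
  refine ⟨fun w => if w ∈ Ω then max (s1 w) (s w + η * lam p ρ (2 * r) w) else s1 w,
    ⟨?_, ?_, ?_, ?_⟩, ?_, ?_⟩
  · intro w hw
    exact (hs1.nonneg w hw).trans (hsub w hw)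
  · intro w hw
    split_ifs with hwΩ
    · refine max_le (hs1.le_one w hw) ?_
      have h1 := hwΩ.1
      have h2 := hwΩ.2
      rw [mem_ball, dist_eq_norm] at h1
      rw [mem_closedBall, dist_eq_norm, not_le] at h2
      exact hann w h2.le h1.le
    · exact hs1.le_one w hw
  · intro w hw
    have : w ∉ Ω := fun hΩw => (hball (ball_subset_closedBall hΩw.1)).2 hw
    simp only [if_neg this]
    exact hs1.zero w hw
  · intro w hw
    refine SHAt.glue hΩo (hs1.sh w hw) ?_ ?_
    · intro hc
      refine (hs.sh w (hUU hw)).add_lam ?_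
      rintro rfl
      exact (hΩc hc).2 (mem_ball_self hρ)
    · intro hf
      have hc := hΩc hf.1
      have hnΩ : w ∉ Ω := fun h => hf.2 (by rwa [hΩo.interior_eq])
      have h1 : ‖w - p‖ ≤ 2 * r := by rw [← dist_eq_norm]; exact hc.1
      have h2 : ρ ≤ ‖w - p‖ := by
        rw [← dist_eq_norm]; exact not_lt.1 hc.2
      rcases h1.lt_or_eq with h3 | h3
      · have h4 : ‖w - p‖ = ρ := by
          refine le_antisymm ?_ h2
          by_contra h5
          refine hnΩ ⟨by rwa [mem_ball, dist_eq_norm], ?_⟩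
          rwa [mem_closedBall, dist_eq_norm]
        rw [lam_rho hρ hR h4, mul_one]
        exact hsρ w (by rw [mem_closedBall, dist_eq_norm, h4])
      · rw [lam_R h3, mul_zero, add_zero]
        exact hle w hw
  · intro w hw
    exact (hle w hw).trans (hsub w hw)
  · intro w hw
    have hw' : ‖w - p‖ < r := by rwa [mem_ball, dist_eq_norm] at hw
    have hwU : w ∈ U' := (hball (by rw [mem_closedBall, dist_eq_norm]; linarith)).1
    rcases le_or_gt ‖w - p‖ ρ with hc | hc
    · have h1 := hsρ w (by rwa [mem_closedBall, dist_eq_norm])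
      have h3 : η * l ≤ η * 1 := mul_le_mul_of_nonneg_left hl1 hη.le
      have h2 := hsub w hwU
      linarith
    · have hΩw : w ∈ Ω := ⟨by rw [mem_ball, dist_eq_norm]; linarith, by
        rw [mem_closedBall, dist_eq_norm]; exact not_le.2 hc⟩
      simp only [if_pos hΩw]
      have h3 := mul_le_mul_of_nonneg_left (lam_ge hρ hR hc.le hw'.le) hη.le
      exact le_trans (by linarith) (le_max_right _ _)

/-! ### Part E : starting the gap -/

theorem sqrt_branch {V : Set ℂ} (hV : IsTopDisk V) {b : ℂ} (hb : b ∉ V) :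
    ∃ σ : ℂ → ℂ, (∀ z, σ z ^ 2 = z - b) ∧ (∀ z ∈ V, AnalyticAt ℂ σ z ∧ deriv σ z ≠ 0) ∧
      ∀ p ∈ V, ∃ ρ > 0, ∀ z ∈ V, ρ ≤ ‖σ z + σ p‖ := by
  obtain ⟨σ, hσc, hσ⟩ := Complex.exists_continuousOn_pow_eq (U := V) hV.2.2 hV.1
    (g := fun z => z - b) (by fun_prop)
    (by rintro ⟨z, hz, h⟩; exact hb (by rwa [← sub_eq_zero.1 h])) two_ne_zero
  have hσ0 : ∀ z ∈ V, σ z ≠ 0 := by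
    intro z hz h
    have := hσ z
    rw [h] at this
    apply hb
    have h2 : z = b := by linear_combination -this
    rwa [← h2]
  have hdf : ∀ z ∈ V, HasStrictDerivAt σ (2 * σ z)⁻¹ z := by
    intro z hz
    apply HasStrictDerivAt.of_local_left_inverse (f := fun w => w ^ 2 + b)
    · exact hσc.continuousAt <| hV.1.mem_nhds hz
    · simpa using (hasStrictDerivAt_pow 2 (σ z)).add_const b
    · simpa using hσ0 z hz
    · exact .of_forall fun w => by simp [hσ w]
  refine ⟨σ, hσ, fun z hz => ?_, fun p hp => ?_⟩
  · have : DifferentiableOn ℂ σ V :=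
      fun w hw => (hdf w hw).hasDerivAt.differentiableAt.differentiableWithinAt
    exact ⟨this.analyticAt (hV.1.mem_nhds hz), by
      rw [(hdf z hz).hasDerivAt.deriv]; simpa using hσ0 z hz⟩
  · have h1 : σ '' V ∈ 𝓝 (σ p) := by
      rw [← (hdf p hp).map_nhds_eq (by simpa using hσ0 p hp)]
      exact Filter.image_mem_map <| hV.1.mem_nhds hp
    obtain ⟨ρ, hρ, hball⟩ := Metric.mem_nhds_iff.1 h1
    refine ⟨ρ, hρ, fun z hz => ?_⟩
    by_contra hlt
    rw [not_le] at hlt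
    obtain ⟨a, ha, hab⟩ := hball (show -σ z ∈ ball (σ p) ρ by
      rw [mem_ball, dist_eq_norm, show -σ z - σ p = -(σ z + σ p) by ring, norm_neg]
      exact hlt)
    have e1 := hσ a
    have e2 := hσ z
    rw [hab] at e1
    have e3 : a = z := by linear_combination e2 - e1
    rw [e3] at hab
    exact hσ0 z hz (by linear_combination hab / 2)

theorem gap_start {U' U K : Set ℂ} (hU' : IsTopDisk U') (hU : IsTopDisk U) (hUU : U' ⊆ U)
    (hne : U' ≠ U) (hK : IsCompact K) (hKU : K ⊆ U') :
    ∃ p' ∈ U', p' ∉ K ∧ ∀ F ⊆ K, (interior F).Nonempty → ∃ N ∈ 𝓝 p', GapOn U' U F N := by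
  obtain ⟨b, hbU, hbf⟩ : ∃ b ∈ U, b ∈ frontier U' := by
    by_contra hcon
    push Not at hcon
    obtain ⟨z, hz⟩ := hU'.2.1.nonempty
    exact hne (hUU.antisymm (frontier_escape hU.2.1.isPreconnected ⟨z, hUU hz, hz⟩ hcon))
  have hbU' : b ∉ U' := fun h => hbf.2 (by rwa [hU'.1.interior_eq])
  obtain ⟨r, hr, hrb⟩ := Metric.nhds_basis_closedBall.mem_iff.1
    ((hU.1.inter hK.isClosed.isOpen_compl).mem_nhds ⟨hbU, fun h => hbU' (hKU h)⟩)
  obtain ⟨σ, hσ, hσa, hσρ⟩ := sqrt_branch hU' hbU'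
  have hσn : ∀ z, ‖σ z‖ ^ 2 = ‖z - b‖ := fun z => by rw [← norm_pow, hσ]
  obtain ⟨p, hp, hpb⟩ := Metric.mem_closure_iff.1 hbf.1 (r / 9) (by linarith)
  rw [dist_comm, dist_eq_norm] at hpb
  have hpb0 : 0 < ‖p - b‖ := norm_pos_iff.2 (sub_ne_zero.2 fun h => hbU' (h ▸ hp))
  obtain ⟨p', hp', hpb'⟩ := Metric.mem_closure_iff.1 hbf.1 ‖p - b‖ hpb0
  rw [dist_comm, dist_eq_norm] at hpb'
  obtain ⟨ρ, hρ, hρσ⟩ := hσρ p hp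
  have hσp : 0 < ‖σ p‖ := by
    rw [norm_pos_iff]
    intro h
    have := hσn p
    rw [h] at this
    simp at this
    simp [← this] at hpb0
  set ρ0 := 2 * ‖σ p‖ with hρ0
  have hρρ0 : ρ ≤ ρ0 := by
    have := hρσ p hp
    have h2 := norm_add_le (σ p) (σ p)
    linarith
  set ω : ℂ → ℝ := fun z => Real.log ρ0 - Real.log ‖σ z + σ p‖ with hω
  set C := Real.log ρ0 - Real.log ρ + 1 with hC
  have hCpos : 0 < C := by linarith [Real.log_le_log hρ hρρ0]
  have hωC : ∀ z ∈ U', ω z ≤ C := fun z hz => by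
    have := Real.log_le_log hρ (hρσ z hz)
    simp only [hω, hC]
    linarith
  have hωpos : ∀ z ∈ U', 0 < ω z → z ∈ closedBall b r := by
    intro z hz h
    have h1 : ‖σ z + σ p‖ < ρ0 := by
      by_contra hcon
      have := Real.log_le_log (by linarith) (not_lt.1 hcon)
      simp only [hω] at h
      linarith
    have h2 : ‖σ z‖ ≤ ‖σ z + σ p‖ + ‖σ p‖ := by
      have := norm_sub_le (σ z + σ p) (σ p)
      simpa using this
    have h3 : ‖σ z‖ < 3 * ‖σ p‖ := by linarith
    have h4 : ‖σ z‖ ^ 2 ≤ 9 * ‖σ p‖ ^ 2 := by nlinarith [norm_nonneg (σ z)]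
    rw [hσn, hσn] at h4
    rw [mem_closedBall, dist_eq_norm]
    linarith
  have hωp' : 0 < ω p' := by
    have h1 : ‖σ p'‖ < ‖σ p‖ := by
      have : ‖σ p'‖ ^ 2 < ‖σ p‖ ^ 2 := by rw [hσn, hσn]; exact hpb'
      exact lt_of_pow_lt_pow_left₀ 2 hσp.le this
    have h2 : ‖σ p' + σ p‖ < ρ0 := by linarith [norm_add_le (σ p') (σ p)]
    have := Real.log_lt_log (hρ.trans_le (hρσ p' hp')) h2
    simp only [hω]
    linarith
  refine ⟨p', hp', fun h => (hrb (show p' ∈ closedBall b r by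
    rw [mem_closedBall, dist_eq_norm]; linarith)).2 h, fun F hFK hFi => ?_⟩
  obtain ⟨ε, hε, hub⟩ := upper_bound hU.1 hU.2.1.isPreconnected ((hFK.trans hKU).trans hUU) hFi
    (isCompact_closedBall b r) fun z hz => (hrb hz).1
  have hne0 : ∀ z ∈ U', σ z + σ p ≠ 0 := fun z hz => norm_pos_iff.1 (hρ.trans_le (hρσ z hz))
  have hωcont : ContinuousAt ω p' := by
    refine continuousAt_const.sub (ContinuousAt.log ?_ (norm_ne_zero_iff.2 (hne0 p' hp')))
    exact ((hσa p' hp').1.continuousAt.add continuousAt_const).norm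
  have hc : 0 < ε / C := div_pos hε hCpos
  refine ⟨_, hωcont.eventually (lt_mem_nhds (half_lt_self hωp')), ε / C * (ω p' / 2),
    by positivity, fun s hs => ?_⟩
  refine ⟨fun z => max (s z) (s z + ε / C * ω z), ⟨?_, ?_, ?_, ?_⟩,
    fun w _ => le_max_left _ _, ?_⟩
  · intro z hz
    exact (hs.nonneg z (hUU hz)).trans (le_max_left _ _)
  · intro z hz
    refine max_le (hs.le_one z (hUU hz)) ?_
    rcases le_or_gt (ω z) 0 with h | h
    · have := mul_nonpos_of_nonneg_of_nonpos hc.le h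
      linarith [hs.le_one z (hUU hz)]
    · have h1 := hub s hs z (hωpos z hz h)
      have h2 : ε / C * ω z ≤ ε / C * C := mul_le_mul_of_nonneg_left (hωC z hz) hc.le
      rw [div_mul_cancel₀ _ hCpos.ne'] at h2
      linarith
  · intro z hz
    have hzU' := hKU (hFK hz)
    have h : ω z ≤ 0 := by
      by_contra h
      exact (hrb (hωpos z hzU' (not_le.1 h))).2 (hFK hz)
    rw [hs.zero z hz, zero_add]
    exact max_eq_left (mul_nonpos_of_nonneg_of_nonpos hc.le h)
  · intro z hz
    refine (hs.sh z (hUU hz)).sup ?_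
    refine (((hs.sh z (hUU hz)).add_log ((hσa z hz).1.add analyticAt_const) (hne0 z hz)
      (-(ε / C))).add_const (ε / C * Real.log ρ0)).congr ?_
    refine Eventually.of_forall fun w => ?_
    simp only [hω, Pi.add_apply]
    ring
  · intro w hw
    have hw' : ω p' / 2 < ω w := hw
    refine le_trans ?_ (le_max_right _ _)
    have := mul_le_mul_of_nonneg_left hw'.le hc.le
    linarith

/-! ### Part F : contraction -/

theorem PLSetting.no_gap {g : ℂ → ℂ} {U' U : Set ℂ} {d : ℕ} (H : PLSetting g U' U d)
    {F Q V0 : Set ℂ} (hV0 : IsOpen V0) (hcl : IsCompact (closure V0)) (hclU : closure V0 ⊆ U')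
    (hQV : Q ⊆ V0) (hgQ : MapsTo g Q Q) (hFV : F ⊆ V0) (hF : ∀ z ∈ U', g z ∈ F → z ∈ F)
    (hcov : ∀ z ∈ frontier V0, ∃ N ∈ 𝓝 z, GapOn U' U F N) {p : ℂ} (hp : p ∈ Q) :
    ¬ ∃ N ∈ 𝓝 p, GapOn U' U F N := by
  classical
  have hVU : V0 ⊆ U' := subset_closure.trans hclU
  have hFU : F ⊆ U := (hFV.trans hVU).trans H.subset
  have hfr : GapOn U' U F (frontier V0) := by
    have hfc : IsCompact (frontier V0) := hcl.of_isClosed_subset isClosed_frontier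
      frontier_subset_closure
    refine hfc.induction_on (p := fun K => GapOn U' U F K) (GapOn.empty H.subset)
      (fun A B hAB h => h.mono hAB) (fun A B h h' => h.union h') ?_
    intro z hz
    obtain ⟨N, hN, h⟩ := hcov z hz
    exact ⟨N, mem_nhdsWithin_of_mem_nhds hN, h⟩
  obtain ⟨η, hη, hgap⟩ := hfr
  have step : ∀ s, InS U F s → ∃ t, InS U F t ∧ ∀ z ∈ Q, (1 + η) * s z ≤ t (g z) := by
    intro s hs
    obtain ⟨s', hs', hle, hg⟩ := hgap s hs
    have hbd : ∀ z ∈ closure V0, s z ≤ 1 - η := by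
      refine max_principle hcl hV0 subset_closure
        (SHAt.usc_within fun z hz => hs.sh z (H.subset (hclU hz)))
        (fun z hz => hs.sh z (H.subset (hVU hz))) ?_
      intro z hz hzV
      have hzf : z ∈ frontier V0 := ⟨hz, fun h => hzV (interior_subset h)⟩
      linarith [hg z hzf, hs'.le_one z (hclU hz)]
    have hlarge : ∀ z ∈ U', s' z ≤ (if z ∈ V0 then max (s' z) ((1 + η) * s z) else s' z) := by
      intro w _
      split_ifs
      · exact le_max_left _ _
      · exact le_rfl
    have hin : InS U' F (fun z => if z ∈ V0 then max (s' z) ((1 + η) * s z) else s' z) := by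
      refine ⟨fun z hz => (hs'.nonneg z hz).trans (hlarge z hz), fun z hz => ?_, fun z hz => ?_,
        fun z hz => ?_⟩
      · split_ifs with h
        · refine max_le (hs'.le_one z hz) ?_
          have := hbd z (subset_closure h)
          nlinarith
        · exact hs'.le_one z hz
      · rw [if_pos (hFV hz), hs.zero z hz, hs'.zero z hz]
        simp
      · refine SHAt.glue hV0 (hs'.sh z hz) (fun _ => (hs.sh z (H.subset hz)).smul (by linarith)) ?_
        intro hzf
        have h1 := hg z hzf
        have h2 := hs.le_one z (H.subset hz)
        nlinarith
    obtain ⟨h1, h2⟩ := H.push hFU hF hin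
    refine ⟨_, h1, fun z hz => le_trans ?_ (h2 z (hVU (hQV hz)))⟩
    rw [if_pos (hQV hz)]
    exact le_max_right _ _
  have iter : ∀ n : ℕ, ∀ s, InS U F s → ∀ z ∈ Q, (1 + η) ^ n * s z ≤ 1 := by
    intro n
    induction n with
    | zero =>
      intro s hs z hz
      simpa using hs.le_one z (H.subset (hVU (hQV hz)))
    | succ n ih =>
      intro s hs z hz
      obtain ⟨t, ht, hst⟩ := step s hs
      have h1 := ih t ht (g z) (hgQ hz)
      have h2 := mul_le_mul_of_nonneg_left (hst z hz) (pow_nonneg (by linarith : 0 ≤ 1 + η) n)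
      rw [pow_succ, mul_assoc]
      exact h2.trans h1
  have hzero : ∀ s, InS U F s → ∀ z ∈ Q, s z ≤ 0 := by
    intro s hs z hz
    by_contra hcon
    rw [not_le] at hcon
    obtain ⟨n, hn⟩ := pow_unbounded_of_one_lt (1 / s z) (by linarith : 1 < 1 + η)
    rw [div_lt_iff₀ hcon] at hn
    linarith [iter n s hs z hz]
  rintro ⟨N, hN, δ, hδ, hgp⟩
  obtain ⟨s', hs', -, h⟩ := hgp _ (InS.const_zero U F)
  obtain ⟨h1, h2⟩ := H.push hFU hF hs'
  have h3 := hzero _ h1 (g p) (hgQ hp)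
  have h4 := h2 p (hVU (hQV hp))
  have h5 := h p (mem_of_mem_nhds hN)
  linarith

/-! ### Part G : inverse branches -/

theorem exists_bounded_injective {V : Set ℂ} (hV : IsTopDisk V) (hne : V ≠ univ) :
    ∃ f : ℂ → ℂ, MapsTo f V (ball 0 1) ∧ InjOn f V ∧ ∀ z ∈ V, deriv f z ≠ 0 := by
  obtain ⟨b, hb⟩ := (ne_univ_iff_exists_notMem V).1 hne
  obtain ⟨σ, hσ, hσa, hσρ⟩ := sqrt_branch hV hb
  obtain ⟨p, hp⟩ := hV.2.1.nonempty
  obtain ⟨ρ, hρ, hρσ⟩ := hσρ p hp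
  have hρ0 : ((ρ / 2 : ℝ) : ℂ) ≠ 0 := by exact_mod_cast (half_pos hρ).ne'
  have hne0 : ∀ z ∈ V, σ z + σ p ≠ 0 := fun z hz => norm_pos_iff.1 (hρ.trans_le (hρσ z hz))
  refine ⟨fun z => ((ρ / 2 : ℝ) : ℂ) * (σ z + σ p)⁻¹, fun z hz => ?_, fun z hz w hw h => ?_,
    fun z hz => ?_⟩
  · rw [mem_ball, dist_zero_right, norm_mul, norm_inv, Complex.norm_real, Real.norm_eq_abs,
      abs_of_pos (half_pos hρ), ← div_eq_mul_inv, div_lt_one (hρ.trans_le (hρσ z hz))]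
    linarith [hρσ z hz]
  · have h1 := inv_injective (mul_left_cancel₀ hρ0 h)
    have h2 : σ z = σ w := add_right_cancel h1
    have e1 := hσ z
    have e2 := hσ w
    rw [h2] at e1
    linear_combination e2 - e1
  · have hd := ((((hσa z hz).1.differentiableAt.hasDerivAt).add_const (σ p)).inv
      (hne0 z hz)).const_mul ((ρ / 2 : ℝ) : ℂ)
    have hd' : HasDerivAt (fun z => ((ρ / 2 : ℝ) : ℂ) * (σ z + σ p)⁻¹) _ z := hd
    rw [hd'.deriv]
    exact mul_ne_zero hρ0 (div_ne_zero (neg_ne_zero.2 (hσa z hz).2) (pow_ne_zero 2 (hne0 z hz)))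

theorem PLSetting.deriv_ne {g : ℂ → ℂ} {U' U : Set ℂ} {d : ℕ} (H : PLSetting g U' U d)
    {z : ℂ} (hz : z ∈ U') (hg : g z ∉ postCrit g U') : deriv g z ≠ 0 := fun h =>
  hg (H.post_fwd z (H.crit_sub ⟨hz, h⟩))

theorem PLSetting.covering {g : ℂ → ℂ} {U' U : Set ℂ} {d : ℕ} (H : PLSetting g U' U d) :
    IsCoveringMapOn (fun z : U' => (⟨g z, H.mapsTo z.2⟩ : U)) {w : U | (w : ℂ) ∉ postCrit g U'} := by
  have hcont : Continuous (fun z : U' => (⟨g z, H.mapsTo z.2⟩ : U)) :=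
    Continuous.subtype_mk (continuousOn_iff_continuous_domRestrict.1 H.holo.continuousOn) _
  haveI : LocallyCompactSpace U := H.disk.1.locallyCompactSpace
  have hproper : IsProperMap (fun z : U' => (⟨g z, H.mapsTo z.2⟩ : U)) := by
    rw [isProperMap_iff_isCompact_preimage]
    refine ⟨hcont, fun K hK => ?_⟩
    rw [Subtype.isCompact_iff]
    have h1 := H.proper (Subtype.val '' K) (by rintro _ ⟨w, -, rfl⟩; exact w.2)
      (hK.image continuous_subtype_val)
    convert h1 using 1
    ext z
    constructor
    · rintro ⟨w, hw, rfl⟩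
      exact ⟨w.2, _, hw, rfl⟩
    · rintro ⟨hz, w, hw, hwz⟩
      refine ⟨⟨z, hz⟩, ?_, rfl⟩
      have : (⟨g z, H.mapsTo hz⟩ : U) = w := Subtype.ext hwz.symm
      show (⟨g z, H.mapsTo hz⟩ : U) ∈ K
      rwa [this]
  refine hproper.isClosedMap.isCoveringMapOn_of_isLocalHomeomorphOn ?_ ?_
  · intro w hw
    have hc := H.deg.2 w w.2 (by
      rintro ⟨c, hc, hcw⟩
      exact hw (hcw ▸ H.post_fwd c (H.crit_sub hc)))
    have hfin : (U' ∩ g ⁻¹' {(w : ℂ)}).Finite := Set.finite_of_ncard_pos (by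
      rw [hc]; have := H.two_le_d; omega)
    refine Set.Finite.of_finite_image (f := Subtype.val) (hfin.subset ?_)
      Subtype.val_injective.injOn
    rintro _ ⟨z, hz, rfl⟩
    exact ⟨z.2, congrArg Subtype.val hz⟩
  · have hgl : IsLocalHomeomorphOn g {z | z ∈ U' ∧ deriv g z ≠ 0} := by
      refine IsLocalHomeomorphOn.mk _ _ fun z hz => ?_
      have hs := ((H.anal hz.1).hasStrictDerivAt).hasStrictFDerivAt_equiv hz.2
      exact ⟨hs.toOpenPartialHomeomorph g, hs.mem_toOpenPartialHomeomorph_source, fun _ _ => rfl⟩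
    refine IsLocalHomeomorphOn.of_comp_left (g := (Subtype.val : U → ℂ)) ?_
      H.disk.1.isOpenEmbedding_subtypeVal.isLocalHomeomorph.isLocalHomeomorphOn
      (fun z _ => hcont.continuousAt)
    have h2 := hgl.comp (f := (Subtype.val : U' → ℂ))
      (s := (fun z : U' => (⟨g z, H.mapsTo z.2⟩ : U)) ⁻¹' {w : U | (w : ℂ) ∉ postCrit g U'})
      H.disk'.1.isOpenEmbedding_subtypeVal.isLocalHomeomorph.isLocalHomeomorphOn
      (fun z hz => ⟨z.2, H.deriv_ne z.2 hz⟩)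
    exact h2

theorem PLSetting.lift_step {g : ℂ → ℂ} {U' U : Set ℂ} {d : ℕ} (H : PLSetting g U' U d)
    {x : ℂ} {R : ℝ} {φ : ℂ → ℂ} (hφ : DifferentiableOn ℂ φ (ball x R))
    (hφU : MapsTo φ (ball x R) U) (hφP : ∀ w ∈ ball x R, φ w ∉ postCrit g U') {w z : ℂ}
    (hw : w ∈ ball x R) (hz : z ∈ U') (hgz : g z = φ w) :
    ∃ ψ : ℂ → ℂ, DifferentiableOn ℂ ψ (ball x R) ∧ MapsTo ψ (ball x R) U' ∧
      (∀ v ∈ ball x R, g (ψ v) = φ v) ∧ ψ w = z := by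
  classical
  have hconv : Convex ℝ (ball x R) := convex_ball x R
  haveI : LocallyPathConnectedSpace (ball x R) := isOpen_ball.locallyPathConnectedSpace
  haveI : ContractibleSpace (ball x R) := hconv.contractibleSpace ⟨w, hw⟩
  let f : C(ball x R, U) := ⟨fun v => ⟨φ v, hφU v.2⟩,
    Continuous.subtype_mk (continuousOn_iff_continuous_domRestrict.1 hφ.continuousOn) _⟩
  obtain ⟨Φ, ⟨hΦw, hΦ⟩, -⟩ := H.covering.existsUnique_continuousMap_lifts f (a₀ := ⟨w, hw⟩)
    (e₀ := ⟨z, hz⟩) (Subtype.ext hgz) (fun a => hφP a a.2)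
  let ψ : ℂ → ℂ := fun v => if h : v ∈ ball x R then Φ ⟨v, h⟩ else 0
  have hψ : ∀ v (h : v ∈ ball x R), ψ v = Φ ⟨v, h⟩ := fun v h => dif_pos h
  have hψU : MapsTo ψ (ball x R) U' := fun v hv => by
    rw [hψ v hv]; exact (Φ ⟨v, hv⟩).2
  have hψg : ∀ v ∈ ball x R, g (ψ v) = φ v := fun v hv => by
    rw [hψ v hv]
    exact congrArg Subtype.val (congrFun hΦ ⟨v, hv⟩)
  have hψc : ContinuousOn ψ (ball x R) := by
    rw [continuousOn_iff_continuous_domRestrict]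
    have : (ball x R).domRestrict ψ = fun v => (Φ v : ℂ) := by
      ext v
      exact hψ v v.2
    rw [this]
    exact continuous_subtype_val.comp Φ.continuous
  refine ⟨ψ, fun v hv => ?_, hψU, hψg, by rw [hψ w hw, hΦw]⟩
  have hd := H.deriv_ne (hψU hv) (by rw [hψg v hv]; exact hφP v hv)
  have hs := (H.anal (hψU hv)).hasStrictDerivAt
  have hL := hs.to_localInverse hd
  rw [hψg v hv] at hL
  have hφd : DifferentiableAt ℂ φ v := hφ.differentiableAt (isOpen_ball.mem_nhds hv)
  have hcomp := hL.hasDerivAt.differentiableAt.comp v hφd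
  refine (hcomp.congr_of_eventuallyEq ?_).differentiableWithinAt
  have hev := (hψc.continuousAt (isOpen_ball.mem_nhds hv)).eventually
    (HasStrictDerivAt.eventually_left_inverse hs hd)
  filter_upwards [hev, isOpen_ball.mem_nhds hv] with u hu hub
  rw [hψg u hub] at hu
  exact hu.symm

theorem PLSetting.branch {g : ℂ → ℂ} {U' U : Set ℂ} {d : ℕ} (H : PLSetting g U' U d)
    {x : ℂ} {R : ℝ} {Q : Set ℂ} (hR : ball x R ⊆ U') (hR0 : 0 < R)
    (hP : ∀ w ∈ ball x R, w ∉ postCrit g U') (hx : x ∈ Yset g U' Q) :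
    ∀ (n : ℕ) (z : ℂ), (∀ k < n, g^[k] z ∈ U') → g^[n] z ∈ ball x R →
    ∃ φ : ℂ → ℂ, DifferentiableOn ℂ φ (ball x R) ∧ MapsTo φ (ball x R) U' ∧
      (∀ v ∈ ball x R, φ v ∉ postCrit g U') ∧ φ (g^[n] z) = z ∧ φ x ∈ Yset g U' Q := by
  intro n
  induction n with
  | zero =>
    intro z _ hz
    exact ⟨id, differentiableOn_id, hR, hP, rfl, hx⟩
  | succ n ih =>
    intro z hk hz
    rw [iterate_succ_apply] at hz ⊢
    have hzU : z ∈ U' := hk 0 (Nat.succ_pos n)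
    obtain ⟨φ, h1, h2, h3, h4, h5⟩ := ih (g z) (fun k hkn => by
      rw [← iterate_succ_apply]; exact hk (k + 1) (by omega)) hz
    obtain ⟨ψ, k1, k2, k3, k4⟩ := H.lift_step h1 (h2.mono_right H.subset) h3 hz hzU h4.symm
    refine ⟨ψ, k1, k2, fun v hv hc => h3 v hv ?_, k4, ?_⟩
    · rw [← k3 v hv]
      exact H.post_fwd _ hc
    · have hxb : x ∈ ball x R := mem_ball_self hR0
      exact Y_bwd (k2 hxb) (by rw [k3 x hxb]; exact h5)

theorem PLSetting.small {g : ℂ → ℂ} {U' U : Set ℂ} {d : ℕ} (H : PLSetting g U' U d)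
    {x : ℂ} {Q W : Set ℂ} (hYc : IsCompact (Yset g U' Q)) (hYU : Yset g U' Q ⊆ U')
    (hx : x ∈ Yset g U' Q) (hxP : x ∉ postCrit g U') (hW : IsOpen W) (hYW : Yset g U' Q ⊆ W) :
    ∃ r > 0, ∀ (n : ℕ) (z : ℂ), (∀ k < n, g^[k] z ∈ U') → g^[n] z ∈ closedBall x r → z ∈ W := by
  obtain ⟨R, hR0, hR⟩ := Metric.mem_nhds_iff.1
    ((H.disk'.1.inter H.postCrit_compact.isClosed.isOpen_compl).mem_nhds ⟨hYU hx, hxP⟩)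
  have huniv : U' ≠ univ := fun h => H.ne (H.subset.antisymm (by rw [h]; exact subset_univ U))
  obtain ⟨χ, hχm, hχi, hχd⟩ := exists_bounded_injective H.disk' huniv
  have hχ : DifferentiableOn ℂ χ U' := fun z hz =>
    (differentiableAt_of_deriv_ne_zero (hχd z hz)).differentiableWithinAt
  have hopen : IsOpen (χ '' (W ∩ U')) := by
    rw [isOpen_iff_mem_nhds]
    rintro _ ⟨z, hz, rfl⟩
    have ha : AnalyticAt ℂ χ z := hχ.analyticAt (H.disk'.1.mem_nhds hz.2)
    rw [← ha.hasStrictDerivAt.map_nhds_eq (hχd z hz.2)]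
    exact Filter.image_mem_map ((hW.inter H.disk'.1).mem_nhds hz)
  have hKc : IsCompact (χ '' Yset g U' Q) := hYc.image_of_continuousOn (hχ.continuousOn.mono hYU)
  obtain ⟨δ, hδ, hthick⟩ := hKc.exists_thickening_subset_open hopen
    (image_mono fun z hz => ⟨hYW hz, hYU hz⟩)
  refine ⟨min (R / 2) (δ * R / 4), by positivity, fun n z hk hz => ?_⟩
  have hd : dist (g^[n] z) x ≤ min (R / 2) (δ * R / 4) := hz
  have hd1 := hd.trans (min_le_left _ _)
  have hd2 := hd.trans (min_le_right _ _)
  have hzb : g^[n] z ∈ ball x R := by rw [mem_ball]; linarith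
  obtain ⟨φ, h1, h2, h3, h4, h5⟩ := H.branch (fun w hw => (hR hw).1) hR0
    (fun w hw => (hR hw).2) hx n z hk hzb
  have hsch := Complex.dist_le_div_mul_dist_of_mapsTo_ball (f := χ ∘ φ) (R₂ := 2)
    (hχ.comp h1 h2) (fun v hv => by
      have e1 := hχm (h2 hv)
      have e2 := hχm (h2 (mem_ball_self hR0 : x ∈ ball x R))
      rw [mem_ball, dist_zero_right] at e1 e2
      rw [mem_closedBall, dist_eq_norm]
      exact (norm_sub_le _ _).trans (by simp only [comp_apply]; linarith)) hzb
  have hlt : dist ((χ ∘ φ) (g^[n] z)) ((χ ∘ φ) x) < δ := by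
    refine hsch.trans_lt ?_
    rw [div_mul_eq_mul_div, div_lt_iff₀ hR0]
    nlinarith [mul_pos hδ hR0]
  have hmem : χ (φ (g^[n] z)) ∈ χ '' (W ∩ U') := hthick (by
    rw [mem_thickening_iff]
    exact ⟨χ (φ x), mem_image_of_mem _ h5, hlt⟩)
  obtain ⟨y, hy, hyz⟩ := hmem
  have := hχi hy.2 (h2 hzb) hyz
  rw [h4] at this
  rw [← this]
  exact hy.1

/-! ### Part H : the end of the proof -/

theorem connect_compact {Z A : Set ℂ} (hZ : IsOpen Z) (hZc : IsPreconnected Z) {p' : ℂ}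
    (hp' : p' ∈ Z) (hA : IsCompact A) (hAZ : A ⊆ Z) :
    ∃ K ⊆ Z, IsCompact K ∧ ∀ z ∈ A, ∃ S ⊆ K, IsPreconnected S ∧ p' ∈ S ∧ z ∈ S := by
  refine hA.induction_on (p := fun A => ∃ K ⊆ Z, IsCompact K ∧
    ∀ z ∈ A, ∃ S ⊆ K, IsPreconnected S ∧ p' ∈ S ∧ z ∈ S) ?_ ?_ ?_ ?_
  · exact ⟨∅, empty_subset _, isCompact_empty, by simp⟩
  · rintro B C hBC ⟨K, h1, h2, h3⟩
    exact ⟨K, h1, h2, fun z hz => h3 z (hBC hz)⟩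
  · rintro B C ⟨K, h1, h2, h3⟩ ⟨L, k1, k2, k3⟩
    refine ⟨K ∪ L, union_subset h1 k1, h2.union k2, ?_⟩
    rintro z (hz | hz)
    · obtain ⟨S, hS, h⟩ := h3 z hz
      exact ⟨S, hS.trans subset_union_left, h⟩
    · obtain ⟨S, hS, h⟩ := k3 z hz
      exact ⟨S, hS.trans subset_union_right, h⟩
  · intro z hz
    have hpc : IsPathConnected Z := hZ.isConnected_iff_isPathConnected.1 ⟨⟨p', hp'⟩, hZc⟩
    obtain ⟨γ, hγ⟩ := hpc.joinedIn p' hp' z (hAZ hz)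
    obtain ⟨ε, hε, hb⟩ := Metric.nhds_basis_closedBall.mem_iff.1 (hZ.mem_nhds (hAZ hz))
    refine ⟨closedBall z ε, mem_nhdsWithin_of_mem_nhds (closedBall_mem_nhds z hε),
      range γ ∪ closedBall z ε, union_subset (by rintro _ ⟨t, rfl⟩; exact hγ t) hb,
      (isCompact_range γ.continuous).union (isCompact_closedBall z ε), fun w hw => ?_⟩
    refine ⟨_, Subset.rfl, ?_, Or.inl ⟨0, γ.source⟩, Or.inr hw⟩
    exact (isPreconnected_range γ.continuous).union z ⟨1, γ.target⟩ (mem_closedBall_self hε.le)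
      (convex_closedBall z ε).isPreconnected

theorem PLSetting.hull_sub_Y {g : ℂ → ℂ} {U' U : Set ℂ} {d : ℕ} (H : PLSetting g U' U d)
    {X : Set ℂ} (hX : IsCompact X) (hXU : X ⊆ U') (hgX : MapsTo g X X) {x : ℂ}
    (hx : x ∈ Yset g U' (topHull X)) (hxP : x ∉ postCrit g U') :
    topHull X ⊆ Yset g U' (topHull X) := by
  intro p hp
  by_contra hpY
  have hQU : topHull X ⊆ U' := topHull_subset_disk hX H.disk' hXU
  have hQc := isCompact_topHull hX
  have hYcl := H.Y_closed hQc.isClosed hQU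
  have hYc : IsCompact (Yset g U' (topHull X)) := hQc.of_isClosed_subset hYcl Y_sub
  have hYU : Yset g U' (topHull X) ⊆ U' := Y_sub.trans hQU
  obtain ⟨V0, hV0, hQV, hVU, hVc⟩ := exists_open_between_and_isCompact_closure hQc H.disk'.1 hQU
  obtain ⟨p', hp'U, hp'V, hgap⟩ := gap_start H.disk' H.disk H.subset H.ne hVc hVU
  have hZo : IsOpen (U' ∩ (Yset g U' (topHull X))ᶜ) := H.disk'.1.inter hYcl.isOpen_compl
  have hZc : IsPreconnected (U' ∩ (Yset g U' (topHull X))ᶜ) :=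
    diff_preconn H.disk' hYc hYU (compl_preconn hYc (H.Y_hull hX hXU))
  have hfr : frontier V0 ⊆ U' ∩ (Yset g U' (topHull X))ᶜ := fun z hz =>
    ⟨hVU hz.1, fun h => hz.2 (by rw [hV0.interior_eq]; exact hQV (Y_sub h))⟩
  have hfc : IsCompact (frontier V0) := hVc.of_isClosed_subset isClosed_frontier
    frontier_subset_closure
  obtain ⟨K, hKZ, hKc, hK⟩ := connect_compact hZo hZc
    ⟨hp'U, fun h => hp'V (subset_closure (hQV (Y_sub h)))⟩ (hfc.union (isCompact_singleton (x := p)))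
    (union_subset hfr (singleton_subset_iff.2 ⟨hQU hp, hpY⟩))
  obtain ⟨W, hW, hYW, hWV, -⟩ := exists_open_between_and_isCompact_closure hYc
    (hV0.inter hKc.isClosed.isOpen_compl) (fun z hz => ⟨hQV (Y_sub hz), fun h => (hKZ h).2 hz⟩)
  obtain ⟨r, hr, hsm⟩ := H.small hYc hYU hx hxP hW hYW
  set T : Set ℂ := {z | ∃ n : ℕ, (∀ k < n, g^[k] z ∈ U') ∧ g^[n] z ∈ closedBall x r} with hT
  have hTW : T ⊆ W := by
    rintro z ⟨n, h1, h2⟩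
    exact hsm n z h1 h2
  have hFW : closure T ⊆ V0 ∩ Kᶜ := (closure_mono hTW).trans hWV
  have hTb : ∀ z ∈ U', g z ∈ T → z ∈ T := by
    rintro z hz ⟨n, h1, h2⟩
    refine ⟨n + 1, fun k hk => ?_, by rwa [iterate_succ_apply]⟩
    rcases k with _ | k
    · exact hz
    · rw [iterate_succ_apply]
      exact h1 k (by omega)
  have hFi : (interior (closure T)).Nonempty := by
    refine ⟨x, interior_mono subset_closure ?_⟩
    rw [mem_interior_iff_mem_nhds]
    exact Filter.mem_of_superset (closedBall_mem_nhds x hr) fun z hz => ⟨0, by simp, hz⟩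
  have hg1 := hgap (closure T) ((hFW.trans inter_subset_left).trans subset_closure) hFi
  have hprop : ∀ z ∈ frontier V0 ∪ {p}, ∃ N ∈ 𝓝 z, GapOn U' U (closure T) N := by
    intro z hz
    obtain ⟨S, hSK, hS, hpS, hzS⟩ := hK z hz
    exact gap_propagate H.disk'.1 H.subset isClosed_closure hS
      (fun w hw => (hKZ (hSK hw)).1) (fun w hw h => (hFW h).2 (hSK hw)) hpS hg1 z hzS
  exact H.no_gap hV0 hVc hVU hQV (H.hull_fwd hX hXU hgX) (hFW.trans inter_subset_left)
    (H.closure_bwd hTb) (fun z hz => hprop z (Or.inl hz)) hp (hprop p (Or.inr rfl))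

/-- **Proposition.** Let `X ⊆ U` be a compact forward invariant set. -/
theorem postCrit_in_or_boundary {g : ℂ → ℂ} {U' U : Set ℂ} {d : ℕ}
    (H : PLSetting g U' U d) {X : Set ℂ}
    (hXcomp : IsCompact X) (hXsub : X ⊆ U') (hXinv : g '' X ⊆ X)
    (hPX : postCrit g U' ⊆ X)
    (hne : {x ∈ topHull X | grandOrbit g U' x ⊆ topHull X}.Nonempty) :
    postCrit g U' ⊆ {x ∈ topHull X | grandOrbit g U' x ⊆ topHull X} ∨
    frontier {x ∈ topHull X | grandOrbit g U' x ⊆ topHull X} ⊆ postCrit g U' := by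
  have hgX : MapsTo g X X := fun z hz => hXinv ⟨z, hz, rfl⟩
  have hQU : topHull X ⊆ U' := topHull_subset_disk hXcomp H.disk' hXsub
  have hYcl : IsClosed (Yset g U' (topHull X)) :=
    H.Y_closed (isCompact_topHull hXcomp).isClosed hQU
  by_cases h : Yset g U' (topHull X) ⊆ postCrit g U'
  · right
    exact hYcl.frontier_subset.trans h
  · left
    obtain ⟨x, hx, hxP⟩ := not_subset.1 h
    exact (hPX.trans (subset_topHull X)).trans (H.hull_sub_Y hXcomp hXsub hgX hx hxP)
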